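/- Let Ω ⊂ ℂⁿ, n ≥ 2, be a bounded domain admitting a C³ defining function ρ such that every boundary point of Ω is strongly pseudoconvex (with respect to ρ), and let p ∈ ∂Ω. If F : Ω → Ω is a holomorphic map such that F(z₀) = z₀ for some z₀ ∈ Ω and F(z) = z + o(‖z−p‖²) as z → p within Ω, then F(z) = z for all z ∈ Ω. -/

import Mathlib

open Complex Topology Filter Metric Set Function

noncomputable section

/-- `ℂⁿ` as a normed space. -/
abbrev En (n : ℕ) : Type := EuclideanSpace ℂ (Fin n)

/-- A domain: a nonempty open connected set. -/
def IsDomain' {n : ℕ} (Ω : Set (En n)) : Prop :=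
  IsOpen Ω ∧ IsConnected Ω

/-- The Levi form of `ρ` at `q` in direction `ξ`:
`(1/4)(H_q(ξ,ξ) + H_q(iξ,iξ))` with `H_q` the second real Fréchet derivative. -/
def LeviForm {n : ℕ} (ρ : En n → ℝ) (q ξ : En n) : ℝ :=
  (1 / 4) * (iteratedFDeriv ℝ 2 ρ q ![ξ, ξ] + iteratedFDeriv ℝ 2 ρ q ![I • ξ, I • ξ])

/-- `ξ` lies in the complex tangent space of `{ρ = 0}` at `q`. -/
def InCplxTangent {n : ℕ} (ρ : En n → ℝ) (q ξ : En n) : Prop :=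
  fderiv ℝ ρ q ξ = 0 ∧ fderiv ℝ ρ q (I • ξ) = 0

/-- `ρ` is a `C^m` defining function for `Ω`. -/
def IsDefiningFunction {n : ℕ} (Ω : Set (En n)) (m : ℕ∞) (ρ : En n → ℝ) : Prop :=
  ContDiff ℝ m ρ ∧ Ω = {z | ρ z < 0} ∧ frontier Ω = {z | ρ z = 0} ∧
    ∀ q ∈ frontier Ω, fderiv ℝ ρ q ≠ 0

/-- `q` is a strongly pseudoconvex point with respect to `ρ`. -/
def StronglyPcxAt {n : ℕ} (ρ : En n → ℝ) (q : En n) : Prop :=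
  ∀ ξ : En n, ξ ≠ 0 → InCplxTangent ρ q ξ → 0 < LeviForm ρ q ξ

/-- `Ω` is pseudoconvex with `C^∞` boundary, witnessed by the defining function `ρ`. -/
def IsPcxCinfBoundary {n : ℕ} (Ω : Set (En n)) (ρ : En n → ℝ) : Prop :=
  IsDefiningFunction Ω ⊤ ρ ∧
    ∀ q ∈ frontier Ω, ∀ ξ : En n, InCplxTangent ρ q ξ → 0 ≤ LeviForm ρ q ξ

/-- `F z = z + o(‖z - p‖^k)` as `z → p` within `Ω`. -/
def LittleOh {n : ℕ} (Ω : Set (En n)) (F : En n → En n) (p : En n) (k : ℕ) : Prop :=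
  Tendsto (fun z => ‖F z - z‖ / ‖z - p‖ ^ k) (𝓝[Ω] p) (𝓝 0)

/-- `F` is an automorphism of `Ω`: a holomorphic bijection with holomorphic inverse. -/
def IsAutomorphismOf {n : ℕ} (F : En n → En n) (Ω : Set (En n)) : Prop :=
  DifferentiableOn ℂ F Ω ∧ MapsTo F Ω Ω ∧
    ∃ G : En n → En n, DifferentiableOn ℂ G Ω ∧ MapsTo G Ω Ω ∧
      (∀ z ∈ Ω, G (F z) = z) ∧ (∀ z ∈ Ω, F (G z) = z)

namespace HuangConjecture

set_option linter.unusedSectionVars false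

variable {E G : Type*} [NormedAddCommGroup E] [NormedSpace ℂ E]
  [NormedAddCommGroup G] [NormedSpace ℂ G]

/-! ### Cauchy-type estimates -/

theorem norm_sub_le_of_norm_le_on_ball {f : E → G} {x y : E} {r M : ℝ}
    (hd : DifferentiableOn ℂ f (ball x r)) (hM : ∀ w ∈ ball x r, ‖f w‖ ≤ M)
    (hy : y ∈ ball x r) : ‖f y - f x‖ ≤ 2 * M / r * ‖y - x‖ := by
  have hr : 0 < r := nonempty_ball.1 ⟨y, hy⟩
  have := Complex.dist_le_div_mul_dist_of_mapsTo_ball (R₂ := 2 * M) hd (fun w hw => by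
    rw [mem_closedBall, dist_eq_norm]
    linarith [norm_sub_le (f w) (f x), hM w hw, hM x (mem_ball_self hr)]) hy
  rwa [dist_eq_norm, dist_eq_norm] at this

theorem norm_fderiv_le_of_norm_le_on_ball {f : E → G} {x : E} {r M : ℝ} (hr : 0 < r)
    (hd : DifferentiableOn ℂ f (ball x r)) (hM : ∀ w ∈ ball x r, ‖f w‖ ≤ M) :
    ‖fderiv ℂ f x‖ ≤ 2 * M / r :=
  Complex.norm_fderiv_le_div_of_mapsTo_ball (R₂ := 2 * M) hd (fun w hw => by
    rw [mem_closedBall, dist_eq_norm]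
    linarith [norm_sub_le (f w) (f x), hM w hw, hM x (mem_ball_self hr)]) hr

theorem norm_taylor_two_le_of_norm_le_on_ball {f : E → G} {x y : E} {r M : ℝ}
    (hd : DifferentiableOn ℂ f (ball x r)) (hM : ∀ w ∈ ball x r, ‖f w‖ ≤ M)
    (hy : y ∈ ball x r) :
    ‖f y - f x - fderiv ℂ f x (y - x)‖ ≤ 4 * M * (‖y - x‖ / r) ^ 2 := by
  have hr : 0 < r := nonempty_ball.1 ⟨y, hy⟩
  have hx := mem_ball_self hr (x := x)
  set h : E → G := fun w => f w - f x - fderiv ℂ f x (w - x) with hh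
  have h0 : h x = 0 := by simp [hh]
  have hM0 : 0 ≤ M := (norm_nonneg _).trans (hM x hx)
  have hdx : HasFDerivAt f (fderiv ℂ f x) x :=
    (hd.differentiableAt (ball_mem_nhds x hr)).hasFDerivAt
  have := Complex.dist_le_mul_div_pow_of_mapsTo_ball_of_isLittleO (f := h) (n := 1) (c := x)
    (R₁ := r) (R₂ := 4 * M) (z := y)
    ((hd.sub_const _).sub (by fun_prop)) (fun w hw => by
      rw [mem_closedBall, dist_eq_norm, h0, sub_zero]
      have h1 : ‖fderiv ℂ f x (w - x)‖ ≤ 2 * M / r * r := by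
        refine ((fderiv ℂ f x).le_opNorm _).trans ?_
        have hw' : ‖w - x‖ ≤ r := by rw [mem_ball, dist_eq_norm] at hw; exact hw.le
        exact mul_le_mul (norm_fderiv_le_of_norm_le_on_ball hr hd hM) hw' (norm_nonneg _)
          (by positivity)
      rw [div_mul_cancel₀ _ hr.ne'] at h1
      have h2 := norm_sub_le (f w - f x) (fderiv ℂ f x (w - x))
      have h3 := norm_sub_le (f w) (f x)
      linarith [hM w hw, hM x hx]) (by
      simp only [h0, sub_zero, pow_one]
      exact hdx.isLittleO.norm_right) hy
  rwa [h0, dist_zero_right, dist_eq_norm] at this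

/-! ### Limits of bounded families along ultrafilters -/

theorem exists_hasFDerivAt_of_ultrafilter_limit [FiniteDimensional ℂ E] [FiniteDimensional ℂ G]
    {ι : Type*} (U : Ultrafilter ι) {f : ι → E → G} {g : E → G} {x : E} {r M : ℝ} (hr : 0 < r)
    (hd : ∀ᶠ i in (U : Filter ι), DifferentiableOn ℂ (f i) (ball x r))
    (hM : ∀ᶠ i in (U : Filter ι), ∀ w ∈ ball x r, ‖f i w‖ ≤ M)
    (hg : ∀ w ∈ ball x r, Tendsto (fun i => f i w) U (𝓝 (g w))) :
    ∃ D : E →L[ℂ] G, HasFDerivAt g D x ∧ Tendsto (fun i => fderiv ℂ (f i) x) U (𝓝 D) := by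
  have : ProperSpace (E →L[ℂ] G) := FiniteDimensional.proper ℂ _
  have hx := mem_ball_self hr (x := x)
  have hcpt := isCompact_closedBall (0 : E →L[ℂ] G) (2 * M / r)
  obtain ⟨D, -, hD⟩ := hcpt.ultrafilter_le_nhds (U.map fun i => fderiv ℂ (f i) x) (by
    rw [Filter.le_principal_iff]
    change ∀ᶠ i in (U : Filter ι), fderiv ℂ (f i) x ∈ closedBall 0 (2 * M / r)
    filter_upwards [hd, hM] with i h1 h2
    simpa using norm_fderiv_le_of_norm_le_on_ball hr h1 h2)
  have hD' : Tendsto (fun i => fderiv ℂ (f i) x) U (𝓝 D) := hD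
  refine ⟨D, ?_, hD'⟩
  have key : ∀ w ∈ ball x r, ‖g w - g x - D (w - x)‖ ≤ 4 * M / r ^ 2 * ‖w - x‖ ^ 2 := by
    intro w hw
    have ht : Tendsto (fun i => ‖f i w - f i x - fderiv ℂ (f i) x (w - x)‖) U
        (𝓝 ‖g w - g x - D (w - x)‖) := by
      refine (((hg w hw).sub (hg x hx)).sub ?_).norm
      exact ((ContinuousLinearMap.apply ℂ G (w - x)).continuous.tendsto D).comp hD'
    refine le_of_tendsto ht ?_
    filter_upwards [hd, hM] with i h1 h2
    refine (norm_taylor_two_le_of_norm_le_on_ball h1 h2 hw).trans_eq ?_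
    rw [div_pow]; ring
  refine HasFDerivAt.of_isLittleO ?_
  have h1 : (fun w => g w - g x - D (w - x)) =O[𝓝 x] (fun w => ‖w - x‖ ^ 2) := by
    refine Asymptotics.IsBigO.of_bound (4 * M / r ^ 2) ?_
    filter_upwards [ball_mem_nhds x hr] with w hw
    simpa using key w hw
  refine h1.trans_isLittleO ?_
  have h2 : Tendsto (fun w => ‖w - x‖) (𝓝 x) (𝓝 0) := by
    have : Tendsto (fun w => ‖w - x‖) (𝓝 x) (𝓝 ‖x - x‖) := by
      apply Continuous.tendsto; fun_prop
    simpa using this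
  have := ((Asymptotics.isLittleO_pow_id (𝕜 := ℝ) one_lt_two).comp_tendsto h2)
  exact Asymptotics.IsLittleO.of_norm_right (this.congr (fun _ => rfl) (fun _ => rfl))

/-- A differentiable map is bounded on a small ball. -/
theorem exists_ball_norm_le {f : E → G} {Ω : Set E} (hΩ : IsOpen Ω)
    (hf : ContinuousOn f Ω) {x : E} (hx : x ∈ Ω) :
    ∃ r > 0, ball x r ⊆ Ω ∧ ∃ M : ℝ, 0 < M ∧ ∀ w ∈ ball x r, ‖f w‖ ≤ M := by
  have hc := (hf.continuousAt (hΩ.mem_nhds hx)).norm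
  have h1 : ∀ᶠ w in 𝓝 x, ‖f w‖ < ‖f x‖ + 1 := hc.eventually_lt_const (by linarith)
  obtain ⟨r, hr, h⟩ := Metric.eventually_nhds_iff_ball.1 (h1.and (hΩ.eventually_mem hx))
  exact ⟨r, hr, fun w hw => (h w hw).2, ‖f x‖ + 1, by positivity, fun w hw => (h w hw).1.le⟩

theorem differentiableOn_fderiv_apply [FiniteDimensional ℂ E] [FiniteDimensional ℂ G]
    {f : E → G} {Ω : Set E} (hΩ : IsOpen Ω) (hf : DifferentiableOn ℂ f Ω) (v : E) :
    DifferentiableOn ℂ (fun z => fderiv ℂ f z v) Ω := by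
  intro x hx
  obtain ⟨r, hr, hrΩ, M, hM0, hM⟩ := exists_ball_norm_le hΩ hf.continuousOn hx
  have hd : DifferentiableOn ℂ f (ball x r) := hf.mono hrΩ
  let t : ℕ → ℂ := fun N => ((N : ℂ) + 1)⁻¹
  have ht0 : ∀ N, t N ≠ 0 := fun N => inv_ne_zero (Nat.cast_add_one_ne_zero N)
  have ht : Tendsto t atTop (𝓝 0) := by
    have := tendsto_one_div_add_atTop_nhds_zero_nat (𝕜 := ℂ)
    simpa [t, one_div] using this
  have hU : ((hyperfilter ℕ : Ultrafilter ℕ) : Filter ℕ) ≤ atTop := by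
    rw [← Nat.cofinite_eq_atTop]; exact hyperfilter_le_cofinite
  have hsmall : ∀ᶠ N in ((hyperfilter ℕ : Ultrafilter ℕ) : Filter ℕ), ‖t N • v‖ < r / 4 := by
    refine hU ?_
    have : Tendsto (fun N => ‖t N • v‖) atTop (𝓝 0) := by
      simpa using (ht.smul_const v).norm
    exact this.eventually_lt_const (by positivity)
  have hincl : ∀ w ∈ ball x (r / 4), ∀ u : E, ‖u‖ < r / 2 → w + u ∈ ball x r := by
    intro w hw u hu
    rw [mem_ball, dist_eq_norm] at hw ⊢
    have : w + u - x = (w - x) + u := by abel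
    rw [this]
    linarith [norm_add_le (w - x) u]
  obtain ⟨D, hD, -⟩ := exists_hasFDerivAt_of_ultrafilter_limit (hyperfilter ℕ)
    (f := fun N y => (t N)⁻¹ • (f (y + t N • v) - f y)) (g := fun z => fderiv ℂ f z v) (x := x)
    (r := r / 4) (M := 2 * M / (r / 2) * ‖v‖) (by positivity) (by
      filter_upwards [hsmall] with N hN
      refine DifferentiableOn.const_smul (DifferentiableOn.sub ?_ ?_) _
      · refine hd.comp (by fun_prop) fun w hw => hincl w hw _ (by linarith)
      · exact hd.mono (ball_subset_ball (by linarith))) (by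
      filter_upwards [hsmall] with N hN w hw
      have hsub : ball w (r / 2) ⊆ ball x r := fun y hy => by
        have := hincl w hw (y - w) (by rwa [mem_ball, dist_eq_norm] at hy)
        simpa using this
      have h1 := norm_sub_le_of_norm_le_on_ball (y := w + t N • v) (hd.mono hsub)
        (fun y hy => hM y (hsub hy)) (by
          rw [mem_ball, dist_eq_norm, add_sub_cancel_left]; linarith)
      rw [add_sub_cancel_left] at h1
      rw [norm_smul, norm_inv]
      have h2 : 0 < ‖t N‖ := norm_pos_iff.2 (ht0 N)
      rw [inv_mul_le_iff₀ h2]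
      refine h1.trans_eq ?_
      rw [norm_smul]; ring) (by
      intro w hw
      have hw' : w ∈ ball x r := ball_subset_ball (by linarith) hw
      have hdw : HasFDerivAt f (fderiv ℂ f w) w :=
        (hd.differentiableAt (isOpen_ball.mem_nhds hw')).hasFDerivAt
      have hl : HasDerivAt (fun s : ℂ => f (w + s • v)) (fderiv ℂ f w v) 0 := by
        have h0 : HasDerivAt (fun s : ℂ => w + s • v) v 0 := by
          simpa using ((hasDerivAt_id (0 : ℂ)).smul_const v).const_add w
        have hdw' : HasFDerivAt f (fderiv ℂ f w) (w + (0 : ℂ) • v) := by simpa using hdw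
        exact hdw'.comp_hasDerivAt (0 : ℂ) h0
      have h3 := hl.tendsto_slope_zero
      have h4 : Tendsto t ((hyperfilter ℕ : Ultrafilter ℕ) : Filter ℕ) (𝓝[≠] 0) :=
        tendsto_nhdsWithin_iff.2 ⟨ht.mono_left hU, Eventually.of_forall ht0⟩
      simpa [Function.comp_def] using h3.comp h4)
  exact hD.differentiableAt.differentiableWithinAt

theorem differentiableOn_finsetProd {ι : Type*} {s : Finset ι} {f : ι → E → ℂ} {Ω : Set E}
    (hf : ∀ i ∈ s, DifferentiableOn ℂ (f i) Ω) :
    DifferentiableOn ℂ (fun z => ∏ i ∈ s, f i z) Ω := by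
  classical
  induction s using Finset.induction_on with
  | empty => simp
  | insert a s ha ih =>
    simp_rw [Finset.prod_insert ha]
    exact (hf a (Finset.mem_insert_self a s)).mul
      (ih fun i hi => hf i (Finset.mem_insert_of_mem hi))

theorem differentiableOn_det_fderiv [FiniteDimensional ℂ E]
    {f : E → E} {Ω : Set E} (hΩ : IsOpen Ω) (hf : DifferentiableOn ℂ f Ω) :
    DifferentiableOn ℂ (fun z => (fderiv ℂ f z).det) Ω := by
  classical
  let b := Module.finBasis ℂ E
  have h : ∀ z, (fderiv ℂ f z).det =
      ∑ σ : Equiv.Perm (Fin (Module.finrank ℂ E)), ((Equiv.Perm.sign σ : ℤ) : ℂ) *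
        ∏ i, LinearMap.toContinuousLinearMap (b.coord (σ i)) (fderiv ℂ f z (b i)) := by
    intro z
    rw [ContinuousLinearMap.det, ← LinearMap.det_toMatrix b, Matrix.det_apply']
    simp [LinearMap.toMatrix_apply]
  simp_rw [h]
  refine DifferentiableOn.fun_sum fun σ _ => DifferentiableOn.const_mul ?_ _
  refine differentiableOn_finsetProd fun i _ => ?_
  exact (ContinuousLinearMap.differentiable _).comp_differentiableOn
    (differentiableOn_fderiv_apply hΩ hf (b i))

theorem exists_norm_det_le [FiniteDimensional ℂ E] (R : ℝ) :
    ∃ C : ℝ, 0 < C ∧ ∀ T : E →L[ℂ] E, ‖T‖ ≤ R → ‖T.det‖ ≤ C := by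
  have : ProperSpace (E →L[ℂ] E) := FiniteDimensional.proper ℂ _
  obtain ⟨C, hC⟩ := (isCompact_closedBall (0 : E →L[ℂ] E) R).exists_bound_of_continuousOn
    (ContinuousLinearMap.continuous_det (𝕜 := ℂ) (E := E)).continuousOn
  exact ⟨max C 1, by positivity, fun T hT => (hC T (by simpa using hT)).trans (le_max_left _ _)⟩

/-! ### Propagation along connected sets -/

theorem lineMap_mem_ball {x w : E} {r : ℝ} (hw : w ∈ ball x (2 * r)) {t : ℂ} (ht : ‖t‖ ≤ 3 / 2) :
    x + t • (w - x) ∈ ball x (3 * r) := by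
  rw [mem_ball, dist_eq_norm] at hw ⊢
  rw [add_sub_cancel_left, norm_smul]
  nlinarith [norm_nonneg (w - x), norm_nonneg t]

theorem eqOn_zero_of_eventuallyEq_zero [CompleteSpace G] {f : E → G} {Ω : Set E} (hΩ : IsOpen Ω)
    (hconn : IsPreconnected Ω) (hf : DifferentiableOn ℂ f Ω) {x : E} (hx : x ∈ Ω)
    (h0 : f =ᶠ[𝓝 x] 0) : EqOn f 0 Ω := by
  have hopen : IsOpen {z | f =ᶠ[𝓝 z] 0} := isOpen_setOfPred_eventually_nhds
  suffices Ω ⊆ {z | f =ᶠ[𝓝 z] 0} from fun z hz => (this hz).self_of_nhds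
  refine hconn.subset_of_closure_inter_subset hopen ⟨x, hx, h0⟩ ?_
  rintro z ⟨hzcl, hz⟩
  obtain ⟨R, hR, hRΩ⟩ := Metric.isOpen_iff.1 hΩ z hz
  set r := R / 4
  have hr : 0 < r := by positivity
  obtain ⟨y, hy, hyz⟩ := Metric.mem_closure_iff.1 hzcl r hr
  have hsub : ball y (3 * r) ⊆ Ω := by
    refine (ball_subset_ball' ?_).trans hRΩ
    rw [dist_comm]; simp only [r] at hyz ⊢; linarith
  change ∀ᶠ w in 𝓝 z, f w = 0
  filter_upwards [ball_mem_nhds z hr] with w hw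
  have hw' : w ∈ ball y (2 * r) := by
    rw [mem_ball] at hw ⊢; linarith [dist_triangle w z y]
  have hmaps : MapsTo (fun t : ℂ => y + t • (w - y)) (ball 0 (3 / 2)) Ω := fun t ht =>
    hsub (lineMap_mem_ball hw' (by simpa using (mem_ball_zero_iff.1 ht).le))
  have hφ : DifferentiableOn ℂ (fun t : ℂ => f (y + t • (w - y))) (ball 0 (3 / 2)) :=
    hf.comp (by fun_prop) hmaps
  have hφ' := hφ.analyticOnNhd isOpen_ball
  have := hφ'.eqOn_zero_of_preconnected_of_eventuallyEq_zero
    (convex_ball (0 : ℂ) (3 / 2)).isPreconnected (mem_ball_self (by norm_num)) (by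
      have hc : Tendsto (fun t : ℂ => y + t • (w - y)) (𝓝 0) (𝓝 y) := by
        have : Continuous (fun t : ℂ => y + t • (w - y)) := by fun_prop
        simpa using this.tendsto 0
      exact hc.eventually hy)
  have h1 := this (x := 1) (by rw [mem_ball_zero_iff]; norm_num)
  simpa using h1

/-- Two-constants estimate on a disc. -/
theorem exists_norm_le_two_constants {δ : ℝ} (hδ : 0 < δ) (hδ1 : δ < 1) :
    ∃ τ : ℝ, 0 < τ ∧ τ < 1 ∧ ∀ (φ : ℂ → ℂ) (a M : ℝ), DifferentiableOn ℂ φ (ball 0 (3 / 2)) →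
      (∀ t ∈ ball (0 : ℂ) (3 / 2), ‖φ t‖ ≤ M) → (∀ t : ℂ, ‖t‖ ≤ δ → ‖φ t‖ ≤ a) →
      ‖φ 1‖ ≤ a ^ (1 - τ) * M ^ τ := by
  have hl : Real.log δ < 0 := Real.log_neg hδ hδ1
  have hu : 0 < Real.log (4 / 3) := Real.log_pos (by norm_num)
  set l := Real.log δ
  set u := Real.log (4 / 3)
  refine ⟨(0 - l) / (u - l), div_pos (by linarith) (by linarith),
    (div_lt_one (by linarith)).2 (by linarith), fun φ a M hφ hM ha => ?_⟩
  have hexp : ∀ s : ℂ, s.re ≤ u → Complex.exp s ∈ ball (0 : ℂ) (3 / 2) := by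
    intro s hs
    rw [mem_ball_zero_iff, Complex.norm_exp]
    calc Real.exp s.re ≤ Real.exp u := Real.exp_le_exp.2 hs
      _ = 4 / 3 := Real.exp_log (by norm_num)
      _ < 3 / 2 := by norm_num
  have hcl : closure (Complex.HadamardThreeLines.verticalStrip l u) ⊆ {s : ℂ | s.re ≤ u} := by
    refine closure_minimal (fun s hs => hs.2.le) ?_
    exact isClosed_le Complex.continuous_re continuous_const
  have hd : DiffContOnCl ℂ (fun s => φ (Complex.exp s))
      (Complex.HadamardThreeLines.verticalStrip l u) := by
    refine DifferentiableOn.diffContOnCl ?_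
    exact hφ.comp (by fun_prop) fun s hs => hexp s (hcl hs)
  have := Complex.HadamardThreeLines.norm_le_interp_of_mem_verticalClosedStrip'
    (f := fun s => φ (Complex.exp s)) (z := 0) (a := a) (b := M) (l := l) (u := u)
    (by linarith) ⟨by simpa using hl.le, by simpa using hu.le⟩ hd
    ⟨M, by
      rintro _ ⟨s, hs, rfl⟩
      exact hM _ (hexp s hs.2)⟩
    (fun s hs => ha _ (by
      rw [Complex.norm_exp]
      have : s.re = l := hs
      rw [this, Real.exp_log hδ]))
    (fun s hs => hM _ (hexp s (le_of_eq hs)))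
  simpa using this

/-- Exponential decay of a locally uniformly bounded sequence of holomorphic functions propagates
from a neighbourhood of one point to the whole connected set. -/
theorem exists_exp_decay_on_compact {g : ℕ → E → ℂ} {Ω : Set E} (hΩ : IsOpen Ω)
    (hconn : IsPreconnected Ω) (hg : ∀ k, DifferentiableOn ℂ (g k) Ω)
    (hb : ∀ x ∈ Ω, ∃ r > 0, ∃ M : ℝ, ∀ k, ∀ w ∈ ball x r, ‖g k w‖ ≤ M)
    {x₀ : E} (hx₀ : x₀ ∈ Ω)
    (h₀ : ∃ r > 0, ∃ C > 0, ∃ c > 0, ∀ k : ℕ, ∀ w ∈ ball x₀ r, ‖g k w‖ ≤ C * Real.exp (-c * k))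
    {K : Set E} (hK : IsCompact K) (hKΩ : K ⊆ Ω) :
    ∃ C > 0, ∃ c > 0, ∀ k : ℕ, ∀ w ∈ K, ‖g k w‖ ≤ C * Real.exp (-c * k) := by
  let S : Set E := {x | ∃ C > 0, ∃ c > 0, ∀ᶠ w in 𝓝 x, ∀ k : ℕ,
    ‖g k w‖ ≤ C * Real.exp (-c * k)}
  have hS : IsOpen S := by
    rw [isOpen_iff_mem_nhds]
    rintro x ⟨C, hC, c, hc, h⟩
    filter_upwards [h.eventually_nhds] with y hy using ⟨C, hC, c, hc, hy⟩
  have hΩS : Ω ⊆ S := by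
    refine hconn.subset_of_closure_inter_subset hS ⟨x₀, hx₀, ?_⟩ ?_
    · obtain ⟨r, hr, C, hC, c, hc, h⟩ := h₀
      refine ⟨C, hC, c, hc, ?_⟩
      filter_upwards [ball_mem_nhds x₀ hr] with w hw k using h k w hw
    rintro z ⟨hzcl, hz⟩
    obtain ⟨R₁, hR₁, M, hM⟩ := hb z hz
    obtain ⟨R₂, hR₂, hRΩ⟩ := Metric.isOpen_iff.1 hΩ z hz
    set r := min R₁ R₂ / 4 with hrdef
    have hr : 0 < r := by positivity
    have h4r1 : 4 * r ≤ R₁ := by rw [hrdef]; linarith [min_le_left R₁ R₂]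
    have h4r2 : 4 * r ≤ R₂ := by rw [hrdef]; linarith [min_le_right R₁ R₂]
    obtain ⟨y, hy, hyz⟩ := Metric.mem_closure_iff.1 hzcl r hr
    obtain ⟨C, hC, c, hc, hy⟩ := hy
    obtain ⟨s, hs, hys⟩ := Metric.eventually_nhds_iff_ball.1 hy
    have hsub : ball y (3 * r) ⊆ ball z (4 * r) := by
      refine ball_subset_ball' ?_
      rw [dist_comm]; linarith
    set δ := min (s / (3 * r)) (1 / 2)
    have hδ : 0 < δ := by positivity
    have hδ1 : δ < 1 := (min_le_right _ _).trans_lt (by norm_num)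
    obtain ⟨τ, hτ, hτ1, hest⟩ := exists_norm_le_two_constants hδ hδ1
    refine ⟨C ^ (1 - τ) * (|M| + 1) ^ τ, by positivity, c * (1 - τ),
      mul_pos hc (by linarith), ?_⟩
    filter_upwards [ball_mem_nhds z hr] with w hw k
    have hw' : w ∈ ball y (2 * r) := by
      rw [mem_ball] at hw ⊢; linarith [dist_triangle w z y]
    have hmaps : ∀ t ∈ ball (0 : ℂ) (3 / 2), y + t • (w - y) ∈ ball z (4 * r) := fun t ht =>
      hsub (lineMap_mem_ball hw' (by simpa using (mem_ball_zero_iff.1 ht).le))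
    have := hest (fun t => g k (y + t • (w - y))) (C * Real.exp (-c * k)) (|M| + 1)
      ((hg k).comp (by fun_prop) fun t ht =>
        hRΩ (ball_subset_ball h4r2 (hmaps t ht)))
      (fun t ht => (hM k _ (ball_subset_ball h4r1 (hmaps t ht))).trans
        (by linarith [le_abs_self M]))
      (fun t ht => by
        refine hys _ ?_ k
        rw [mem_ball, dist_eq_norm] at hw' ⊢
        rw [add_sub_cancel_left, norm_smul]
        have h1 : ‖t‖ ≤ s / (3 * r) := ht.trans (min_le_left _ _)
        have h2 : s / (3 * r) * (2 * r) < s := by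
          rw [div_mul_eq_mul_div, div_lt_iff₀ (by positivity)]; nlinarith
        have h3 : ‖t‖ * ‖w - y‖ ≤ s / (3 * r) * (2 * r) :=
          mul_le_mul h1 hw'.le (norm_nonneg _) (by positivity)
        linarith)
    simp only [one_smul, add_sub_cancel] at this
    refine this.trans_eq ?_
    rw [Real.mul_rpow hC.le (Real.exp_pos _).le, ← Real.exp_mul]
    have : -c * k * (1 - τ) = -(c * (1 - τ)) * k := by ring
    rw [this]; ring
  choose! C hC c hc h using fun x (hx : x ∈ K) => hΩS (hKΩ hx)
  obtain ⟨t, htK, ht⟩ := hK.elim_nhds_subcover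
    (fun x => {w | ∀ k : ℕ, ‖g k w‖ ≤ C x * Real.exp (-c x * k)}) (fun x hx => h x hx)
  rcases t.eq_empty_or_nonempty with rfl | hne
  · refine ⟨1, one_pos, 1, one_pos, fun k w hw => ?_⟩
    simpa using ht hw
  refine ⟨∑ x ∈ t, C x, Finset.sum_pos (fun x hx => hC x (htK x hx)) hne, t.inf' hne c,
    (Finset.lt_inf'_iff _).2 fun x hx => hc x (htK x hx), fun k w hw => ?_⟩
  obtain ⟨x, hx, hw'⟩ := mem_iUnion₂.1 (ht hw)
  refine (hw' k).trans ?_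
  refine mul_le_mul (Finset.single_le_sum (f := C) (fun y hy => (hC y (htK y hy)).le) hx)
    (Real.exp_le_exp.2 ?_) (Real.exp_pos _).le (Finset.sum_nonneg fun y hy => (hC y (htK y hy)).le)
  have := Finset.inf'_le c hx
  have hk : (0 : ℝ) ≤ k := k.cast_nonneg
  nlinarith

/-! ### The horosphere estimate in one variable -/

/-- Maximum principle on a truncated half plane. -/
theorem norm_le_on_halfDisc {h : ℂ → ℂ} {a C R : ℝ}
    (hd : ∀ X : ℂ, a ≤ X.re → ‖X‖ ≤ R → DifferentiableAt ℂ h X)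
    (hline : ∀ X : ℂ, X.re = a → ‖X‖ ≤ R → ‖h X‖ ≤ C)
    (harc : ∀ X : ℂ, a ≤ X.re → ‖X‖ = R → ‖h X‖ ≤ C) {X : ℂ} (hX : a ≤ X.re) (hXR : ‖X‖ ≤ R) :
    ‖h X‖ ≤ C := by
  rcases hXR.eq_or_lt with hXR' | hXR'
  · exact harc X hX hXR'
  rcases hX.eq_or_lt with hXa | hXa
  · exact hline X hXa.symm hXR
  set U : Set ℂ := {Y : ℂ | a < Y.re ∧ ‖Y‖ < R} with hU
  have hUo : IsOpen U :=
    (isOpen_lt continuous_const Complex.continuous_re).inter (isOpen_lt continuous_norm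
      continuous_const)
  have hcl : closure U ⊆ {Y : ℂ | a ≤ Y.re ∧ ‖Y‖ ≤ R} := by
    refine closure_minimal (fun Y hY => ⟨hY.1.le, hY.2.le⟩) ?_
    exact (isClosed_le continuous_const Complex.continuous_re).inter (isClosed_le continuous_norm
      continuous_const)
  have hbdd : Bornology.IsBounded U :=
    (isBounded_ball (x := (0 : ℂ)) (r := R)).subset fun Y hY => by simpa using hY.2
  refine Complex.norm_le_of_forall_mem_frontier_norm_le hbdd
    (DifferentiableOn.diffContOnCl fun Y hY =>
      (hd Y (hcl hY).1 (hcl hY).2).differentiableWithinAt) ?_ (subset_closure ⟨hXa, hXR'⟩)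
  intro Y hY
  rw [hUo.frontier_eq] at hY
  obtain ⟨h1, h2⟩ := hcl hY.1
  rcases h1.eq_or_lt with h | h
  · exact hline Y h.symm h2
  · exact harc Y h1 (h2.antisymm (le_of_not_gt fun h3 => hY.2 ⟨h, h3⟩))

/-- Maximum principle on a half plane, given the bound near infinity. -/
theorem norm_le_on_halfPlane {h : ℂ → ℂ} {a C R : ℝ}
    (hd : ∀ X : ℂ, a ≤ X.re → DifferentiableAt ℂ h X)
    (hline : ∀ X : ℂ, X.re = a → ‖h X‖ ≤ C)
    (hinf : ∀ X : ℂ, a ≤ X.re → R ≤ ‖X‖ → ‖h X‖ ≤ C) {X : ℂ} (hX : a ≤ X.re) : ‖h X‖ ≤ C := by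
  rcases le_total R ‖X‖ with hXR | hXR
  · exact hinf X hX hXR
  · exact norm_le_on_halfDisc (fun Y hY _ => hd Y hY) (fun Y hY _ => hline Y hY)
      (fun Y hY hYR => hinf Y hY hYR.ge) hX hXR

/-- Lower bound on the real part of `φ` on a half plane. -/
theorem re_sub_le_re_on_halfPlane {φ : ℂ → ℂ} {a R : ℝ} (ha : 0 ≤ a)
    (hd : ∀ X : ℂ, a ≤ X.re → DifferentiableAt ℂ φ X)
    (hpos : ∀ X : ℂ, X.re = a → 0 ≤ (φ X).re)
    (hinf : ∀ X : ℂ, a ≤ X.re → R ≤ ‖X‖ → X.re ≤ (φ X).re) {X : ℂ} (hX : a ≤ X.re) :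
    X.re - a ≤ (φ X).re := by
  have := norm_le_on_halfPlane (h := fun Y => Complex.exp (Y - φ Y)) (a := a) (C := Real.exp a)
    (R := R) (fun Y hY => (differentiableAt_id.sub (hd Y hY)).cexp)
    (fun Y hY => by
      rw [Complex.norm_exp, Real.exp_le_exp, Complex.sub_re, hY]
      linarith [hpos Y hY])
    (fun Y hY hYR => by
      rw [Complex.norm_exp, Real.exp_le_exp, Complex.sub_re]
      linarith [hinf Y hY hYR]) hX
  rw [Complex.norm_exp, Real.exp_le_exp, Complex.sub_re] at this
  linarith

theorem re_inv_le_inv_re {w : ℂ} (hw : 0 < w.re) : (w⁻¹).re ≤ (w.re)⁻¹ := by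
  have h := Complex.re_le_norm w⁻¹
  rw [norm_inv] at h
  exact h.trans (inv_anti₀ hw (Complex.re_le_norm w))

theorem re_inv_pos {w : ℂ} (hw : 0 < w.re) : 0 < (w⁻¹).re := by
  have : w ≠ 0 := fun h => by simp [h] at hw
  rw [Complex.inv_re]
  exact div_pos hw (Complex.normSq_pos.2 this)

theorem exists_horosphere_const {B ε κ : ℝ} (hB : 0 < B) (hε : 0 < ε) (hκ : 0 < κ) :
    ∃ T : ℝ, 0 < T ∧ ∀ (A R : ℝ) (g : ℂ → E) (φ : ℂ → ℂ), 0 ≤ A →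
      (∀ X : ℂ, A < X.re → DifferentiableAt ℂ g X) →
      (∀ X : ℂ, A < X.re → ‖g X‖ ≤ B) →
      (∀ X : ℂ, A < X.re → ‖g X‖ < ε → DifferentiableAt ℂ φ X) →
      (∀ X : ℂ, A < X.re → ‖g X‖ < ε → 0 < (φ X).re) →
      (∀ X : ℂ, A < X.re → ‖g X‖ < ε → ε / 4 ≤ ‖g X‖ → κ ≤ ((φ X)⁻¹).re) →
      (∀ X : ℂ, A < X.re → R ≤ ‖X‖ → ‖g X‖ < ε / 2 ∧ X.re ≤ (φ X).re) →
      ∀ X : ℂ, 2 * A + T ≤ X.re → ‖g X‖ < ε / 2 ∧ X.re - (2 * A + T) ≤ (φ X).re := by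
  set ρ : ℝ := min (ε / (16 * B)) (1 / 8) with hρdef
  have hρ : 0 < ρ := by positivity
  have hρ8 : ρ ≤ 1 / 8 := min_le_right _ _
  obtain ⟨N, hN⟩ : ∃ N : ℕ, Real.exp (-(N * κ)) ≤ 2 * ρ := by
    have h1 : Tendsto (fun N : ℕ => Real.exp (-(N * κ))) atTop (𝓝 0) := by
      refine Real.tendsto_exp_neg_atTop_nhds_zero.comp ?_
      exact tendsto_natCast_atTop_atTop.atTop_mul_const hκ
    exact ((h1.eventually_lt_const (by positivity : (0 : ℝ) < 2 * ρ)).mono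
      fun _ h => h.le).exists
  refine ⟨8 * N + 1, by positivity, ?_⟩
  intro A R g φ hA hgd hgB hφd hφpos hφκ hinf
  set R₁ : ℝ := 2 * A + (8 * N + 1) with hR₁
  have hN0 : (0 : ℝ) ≤ N := N.cast_nonneg
  have hAR₁ : A < R₁ := by rw [hR₁]; linarith
  have hgood : ∀ X : ℂ, R₁ ≤ X.re → ‖g X‖ < ε / 2 := by
    by_contra! hbad
    set S : Set ℂ := {X : ℂ | R₁ ≤ X.re ∧ ε / 2 ≤ ‖g X‖} with hS
    have hScl : IsClosed S := by
      have hcont : ContinuousOn (fun X => ‖g X‖) {X : ℂ | R₁ ≤ X.re} := fun X hX =>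
        (hgd X (hAR₁.trans_le hX)).continuousAt.norm.continuousWithinAt
      exact hcont.preimage_isClosed_of_isClosed
        (isClosed_le continuous_const Complex.continuous_re) isClosed_Ici
    have hSb : Bornology.IsBounded S :=
      (isBounded_ball (x := (0 : ℂ)) (r := R)).subset fun X hX => by
        rw [mem_ball_zero_iff]
        by_contra! h
        exact absurd (hinf X (hAR₁.trans_le hX.1) h).1 (not_lt.2 hX.2)
    obtain ⟨Xs, hXs, hmax⟩ := (Metric.isCompact_of_isClosed_isBounded hScl hSb).exists_isMaxOn
      (by obtain ⟨X, h1, h2⟩ := hbad; exact ⟨X, h1, h2⟩) Complex.continuous_re.continuousOn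
    set r : ℝ := Xs.re with hr
    have hrR : R₁ ≤ r := hXs.1
    have hr0 : 0 < r := by linarith
    have hr2A : A < r / 2 := by linarith
    have hgood' : ∀ X : ℂ, r < X.re → ‖g X‖ < ε / 2 := by
      intro X hX
      by_contra! h
      have := hmax (show X ∈ S from ⟨hrR.trans hX.le, h⟩)
      simp only [Set.mem_ofPred_eq] at this
      linarith
    have hstep : ∀ X : ℂ, r < X.re → X.re - r ≤ (φ X).re := by
      intro X hX
      by_contra! hlt
      have hδ : 0 < min (X.re - r) (X.re - r - (φ X).re) := lt_min (by linarith) (by linarith)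
      set δ := min (X.re - r) (X.re - r - (φ X).re) / 2 with hδdef
      have hδ1 : δ < X.re - r := by linarith [min_le_left (X.re - r) (X.re - r - (φ X).re)]
      have hδ2 : δ < X.re - r - (φ X).re := by
        linarith [min_le_right (X.re - r) (X.re - r - (φ X).re)]
      have := re_sub_le_re_on_halfPlane (φ := φ) (a := r + δ) (R := R) (by linarith)
        (fun Y hY => hφd Y (by linarith) (by linarith [hgood' Y (by linarith)]))
        (fun Y hY => (hφpos Y (by linarith) (by linarith [hgood' Y (by linarith)])).le)
        (fun Y hY hYR => (hinf Y (by linarith) hYR).2) (X := X) (by linarith)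
      linarith
    have hball : ∀ X : ℂ, ‖X - Xs‖ ≤ r / 2 → A < X.re := by
      intro X hX
      have := (Complex.abs_re_le_norm (X - Xs)).trans hX
      rw [Complex.sub_re, abs_le] at this
      linarith
    have hLip : ∀ X : ℂ, ‖X - Xs‖ ≤ ρ * r → ε / 4 ≤ ‖g X‖ := by
      intro X hX
      have h1 : ρ * r < r / 2 := by nlinarith
      have h2 := norm_sub_le_of_norm_le_on_ball (f := g) (x := Xs) (y := X) (r := r / 2) (M := B)
        (fun Y hY => (hgd Y (hball Y (by
          rw [mem_ball, dist_eq_norm] at hY; exact hY.le))).differentiableWithinAt)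
        (fun Y hY => hgB Y (hball Y (by rw [mem_ball, dist_eq_norm] at hY; exact hY.le)))
        (by rw [mem_ball, dist_eq_norm]; linarith)
      have h3 : 2 * B / (r / 2) * ‖X - Xs‖ ≤ ε / 4 := by
        have h4 : ρ ≤ ε / (16 * B) := min_le_left _ _
        calc 2 * B / (r / 2) * ‖X - Xs‖ ≤ 2 * B / (r / 2) * (ε / (16 * B) * r) := by
              gcongr
              exact hX.trans (by gcongr)
          _ = ε / 4 := by field_simp; norm_num
      have h5 := hXs.2
      have h6 := norm_sub_norm_le (g Xs) (g X)
      rw [norm_sub_rev] at h6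
      linarith
    set W : Set ℂ := {X : ℂ | (ρ * r < ‖X - Xs‖ ∧ ‖X - Xs‖ < r / 2) ∧ ‖g X‖ < 3 * ε / 4} with hW
    have hcn : Continuous fun X : ℂ => ‖X - Xs‖ := by fun_prop
    have hWo : IsOpen W := by
      have h1 : IsOpen {X : ℂ | ρ * r < ‖X - Xs‖ ∧ ‖X - Xs‖ < r / 2} :=
        (isOpen_lt continuous_const hcn).inter (isOpen_lt hcn continuous_const)
      have hcont : ContinuousOn (fun X => ‖g X‖) {X : ℂ | ρ * r < ‖X - Xs‖ ∧ ‖X - Xs‖ < r / 2} :=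
        fun X hX => (hgd X (hball X hX.2.le)).continuousAt.norm.continuousWithinAt
      exact hcont.isOpen_inter_preimage h1 isOpen_Iio
    have hWcl : closure W ⊆
        {X : ℂ | (ρ * r ≤ ‖X - Xs‖ ∧ ‖X - Xs‖ ≤ r / 2) ∧ ‖g X‖ ≤ 3 * ε / 4} := by
      refine closure_minimal (fun X hX => ⟨⟨hX.1.1.le, hX.1.2.le⟩, hX.2.le⟩) ?_
      have h1 : IsClosed {X : ℂ | ρ * r ≤ ‖X - Xs‖ ∧ ‖X - Xs‖ ≤ r / 2} :=
        (isClosed_le continuous_const hcn).inter (isClosed_le hcn continuous_const)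
      have hcont : ContinuousOn (fun X => ‖g X‖) {X : ℂ | ρ * r ≤ ‖X - Xs‖ ∧ ‖X - Xs‖ ≤ r / 2} :=
        fun X hX => (hgd X (hball X hX.2)).continuousAt.norm.continuousWithinAt
      exact hcont.preimage_isClosed_of_isClosed h1 isClosed_Iic
    have hWb : Bornology.IsBounded W :=
      (isBounded_ball (x := Xs) (r := r / 2)).subset fun X hX => by
        rw [mem_ball, dist_eq_norm]; exact hX.1.2
    set h : ℂ → ℂ := fun X => Complex.exp (-(N * (φ X)⁻¹)) * (((r / 2 : ℝ) : ℂ) / (X - Xs)) with hh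
    have hnorm : ∀ X, ‖h X‖ = Real.exp (-(N * ((φ X)⁻¹).re)) * (r / 2 / ‖X - Xs‖) := by
      intro X
      simp only [hh, norm_mul, norm_div, Complex.norm_exp, Complex.norm_real, Complex.neg_re]
      have : ((N : ℂ) * (φ X)⁻¹).re = N * ((φ X)⁻¹).re := by
        rw [Complex.mul_re]; simp
      rw [this, Real.norm_of_nonneg hr0.le, Real.norm_of_nonneg zero_le_two]
    set X2 : ℂ := Xs + ((r / 4 : ℝ) : ℂ) with hX2
    have hX2sub : ‖X2 - Xs‖ = r / 4 := by
      rw [hX2, add_sub_cancel_left, Complex.norm_real, Real.norm_of_nonneg (by positivity)]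
    have hX2re : X2.re = r + r / 4 := by rw [hX2, Complex.add_re, Complex.ofReal_re]
    have hX2W : X2 ∈ W := by
      refine ⟨⟨?_, ?_⟩, ?_⟩
      · rw [hX2sub]; nlinarith
      · rw [hX2sub]; linarith
      · linarith [hgood' X2 (by rw [hX2re]; linarith)]
    have hmax2 := Complex.norm_le_of_forall_mem_frontier_norm_le (f := h) (C := 1) hWb
      (DifferentiableOn.diffContOnCl fun X hX => by
        obtain ⟨⟨h1, h2⟩, h3⟩ := hWcl hX
        have hA := hball X h2
        have hlt : ‖g X‖ < ε := by linarith
        have hφ0 : φ X ≠ 0 := fun h0 => by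
          have := hφpos X hA hlt; simp [h0] at this
        have hne : X - Xs ≠ 0 := by
          rw [← norm_pos_iff]; exact lt_of_lt_of_le (by positivity) h1
        refine DifferentiableAt.differentiableWithinAt ?_
        exact ((((hφd X hA hlt).inv hφ0).const_mul _).neg.cexp).mul
          ((differentiableAt_const _).div (by fun_prop) hne)) (by
        intro X hX
        rw [hWo.frontier_eq] at hX
        obtain ⟨⟨h1, h2⟩, h3⟩ := hWcl hX.1
        have hA := hball X h2
        have hlt : ‖g X‖ < ε := by linarith
        have hXp : 0 < ‖X - Xs‖ := lt_of_lt_of_le (by positivity) h1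
        rw [hnorm]
        by_cases hcase : ε / 4 ≤ ‖g X‖
        · have h4 := hφκ X hA hlt hcase
          have h5 : Real.exp (-(N * ((φ X)⁻¹).re)) ≤ 2 * ρ := by
            refine le_trans (Real.exp_le_exp.2 ?_) hN
            nlinarith
          have h6 : r / 2 / ‖X - Xs‖ ≤ r / 2 / (ρ * r) := by gcongr
          calc _ ≤ 2 * ρ * (r / 2 / (ρ * r)) := by gcongr
            _ = 1 := by field_simp
        · have h7 : ‖X - Xs‖ = r / 2 := by
            by_contra hne
            refine hX.2 ⟨⟨?_, lt_of_le_of_ne h2 hne⟩, by linarith⟩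
            by_contra! h8
            exact hcase (hLip X h8)
          rw [h7, div_self (by positivity), mul_one, Real.exp_le_one_iff]
          have := re_inv_pos (hφpos X hA hlt)
          have := mul_nonneg hN0 this.le
          linarith) (subset_closure hX2W)
    rw [hnorm, hX2sub] at hmax2
    have h1 : r / 2 / (r / 4) = 2 := by field_simp; norm_num
    rw [h1] at hmax2
    have h2 : r / 4 ≤ (φ X2).re := by
      have := hstep X2 (by rw [hX2re]; linarith)
      rw [hX2re] at this; linarith
    have h3 : ((φ X2)⁻¹).re ≤ 4 / r := by
      refine (re_inv_le_inv_re (by linarith)).trans ?_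
      calc ((φ X2).re)⁻¹ ≤ (r / 4)⁻¹ := by gcongr
        _ = 4 / r := by rw [inv_div]
    have h4 : 1 - N * ((φ X2)⁻¹).re ≤ Real.exp (-(N * ((φ X2)⁻¹).re)) := by
      have := Real.add_one_le_exp (-(N * ((φ X2)⁻¹).re)); linarith
    have h5 : N * ((φ X2)⁻¹).re ≤ N * (4 / r) := by gcongr
    have h6 : N * (4 / r) < 1 / 2 := by
      rw [mul_div_assoc', div_lt_iff₀ hr0]; linarith
    linarith
  intro X hX
  refine ⟨hgood X hX, ?_⟩
  exact re_sub_le_re_on_halfPlane (by linarith) (fun Y hY => hφd Y (hAR₁.trans_le hY)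
    (by linarith [hgood Y hY])) (fun Y hY => (hφpos Y (hAR₁.trans_le hY.ge)
    (by linarith [hgood Y hY.ge])).le) (fun Y hY hYR => (hinf Y (hAR₁.trans_le hY) hYR).2) hX

/-! ### Model domains and self maps tangent to the identity -/

/-- A bounded connected open set with the origin on its boundary, squeezed near the origin between
two paraboloid-like sets with normal coordinate `ℓ`. -/
structure IsModelDomain (Ω : Set E) (ℓ : E →L[ℂ] ℂ) (c K ε : ℝ) : Prop where
  isOpen : IsOpen Ω
  isPreconnected : IsPreconnected Ω
  isBounded : Bornology.IsBounded Ω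
  zero_notMem : (0 : E) ∉ Ω
  c_pos : 0 < c
  K_pos : 0 < K
  ε_pos : 0 < ε
  outer : ∀ z ∈ Ω, ‖z‖ < ε → c * ‖z‖ ^ 2 ≤ (ℓ z).re + K * ‖ℓ z‖ ^ 2
  inner : ∀ z, K * ‖z‖ ^ 2 < (ℓ z).re → z ∈ Ω

/-- A holomorphic self map of `Ω` agreeing with the identity to second order at the origin. -/
structure IsTangentSelfMap (Ω : Set E) (f : E → E) : Prop where
  differentiableOn : DifferentiableOn ℂ f Ω
  mapsTo : MapsTo f Ω Ω
  isLittleO : (fun z => f z - z) =o[𝓝[Ω] 0] fun z => ‖z‖ ^ 2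

namespace IsTangentSelfMap

variable {Ω : Set E} {f g : E → E}

theorem isBigO (hf : IsTangentSelfMap Ω f) : f =O[𝓝[Ω] 0] fun z => z := by
  have h1 : (fun z : E => ‖z‖ ^ 2) =O[𝓝[Ω] 0] fun z => z := by
    refine Asymptotics.IsBigO.of_bound 1 ?_
    filter_upwards [nhdsWithin_le_nhds (ball_mem_nhds (0 : E) one_pos)] with z hz
    rw [mem_ball_zero_iff] at hz
    simp only [norm_pow, norm_norm]
    nlinarith [norm_nonneg z]
  have h2 := (hf.isLittleO.isBigO.trans h1).add (Asymptotics.isBigO_refl (fun z : E => z) _)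
  simpa using h2

theorem tendsto (hf : IsTangentSelfMap Ω f) : Tendsto f (𝓝[Ω] 0) (𝓝[Ω] 0) := by
  refine tendsto_nhdsWithin_iff.2 ⟨?_, eventually_nhdsWithin_of_forall hf.mapsTo⟩
  exact hf.isBigO.trans_tendsto (tendsto_id.mono_left nhdsWithin_le_nhds)

theorem comp (hf : IsTangentSelfMap Ω f) (hg : IsTangentSelfMap Ω g) :
    IsTangentSelfMap Ω (f ∘ g) where
  differentiableOn := hf.differentiableOn.comp hg.differentiableOn hg.mapsTo
  mapsTo := hf.mapsTo.comp hg.mapsTo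
  isLittleO := by
    have h1 : (fun z => f (g z) - g z) =o[𝓝[Ω] 0] fun z => ‖z‖ ^ 2 :=
      (hf.isLittleO.comp_tendsto hg.tendsto).trans_isBigO (hg.isBigO.norm_norm.pow 2)
    simpa using h1.add hg.isLittleO

theorem id : IsTangentSelfMap Ω (_root_.id : E → E) where
  differentiableOn := differentiableOn_id
  mapsTo := mapsTo_id Ω
  isLittleO := by simp

theorem iterate (hf : IsTangentSelfMap Ω f) (k : ℕ) : IsTangentSelfMap Ω f^[k] := by
  induction k with
  | zero => exact id
  | succ k ih => exact ih.comp hf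

end IsTangentSelfMap

namespace IsModelDomain

variable {Ω : Set E} {ℓ : E →L[ℂ] ℂ} {c K ε : ℝ}

theorem normal_ne_zero (hD : IsModelDomain Ω ℓ c K ε) {w : E} (hw : w ∈ Ω) (hwε : ‖w‖ < ε) :
    ℓ w ≠ 0 := by
  intro h0
  have h1 := hD.outer w hw hwε
  have h2 : 0 < ‖w‖ := norm_pos_iff.2 fun h => hD.zero_notMem (h ▸ hw)
  have h3 : 0 < c * ‖w‖ ^ 2 := mul_pos hD.c_pos (by positivity)
  simp [h0] at h1
  linarith

theorem le_re_inv_normal (hD : IsModelDomain Ω ℓ c K ε) {w : E} (hw : w ∈ Ω) (hwε : ‖w‖ < ε) :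
    c * ‖w‖ ^ 2 / ‖ℓ w‖ ^ 2 ≤ ((ℓ w)⁻¹ + K).re := by
  have h0 : 0 < ‖ℓ w‖ := norm_pos_iff.2 (hD.normal_ne_zero hw hwε)
  have h1 := hD.outer w hw hwε
  rw [Complex.add_re, Complex.inv_re, Complex.ofReal_re, Complex.normSq_eq_norm_sq,
    div_add' _ _ _ (by positivity)]
  gcongr

theorem re_inv_normal_pos (hD : IsModelDomain Ω ℓ c K ε) {w : E} (hw : w ∈ Ω) (hwε : ‖w‖ < ε) :
    0 < ((ℓ w)⁻¹ + K).re := by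
  refine lt_of_lt_of_le ?_ (hD.le_re_inv_normal hw hwε)
  have h0 : 0 < ‖ℓ w‖ := norm_pos_iff.2 (hD.normal_ne_zero hw hwε)
  have h2 : 0 < ‖w‖ := norm_pos_iff.2 fun h => hD.zero_notMem (h ▸ hw)
  have := hD.c_pos
  positivity

theorem le_re_inv_inv_normal (hD : IsModelDomain Ω ℓ c K ε) {w : E} (hw : w ∈ Ω) (hwε : ‖w‖ < ε) :
    c * ‖w‖ ^ 2 / (1 + K * ‖ℓ‖ * ε) ^ 2 ≤ (((ℓ w)⁻¹ + K)⁻¹).re := by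
  have h0 : 0 < ‖ℓ w‖ := norm_pos_iff.2 (hD.normal_ne_zero hw hwε)
  have hK := hD.K_pos
  have hε := hD.ε_pos
  have hc := hD.c_pos
  have hpos := hD.re_inv_normal_pos hw hwε
  have hne : 0 < ‖(ℓ w)⁻¹ + K‖ := lt_of_lt_of_le hpos (Complex.re_le_norm _)
  have h1 := hD.le_re_inv_normal hw hwε
  have h2 : ‖(ℓ w)⁻¹ + K‖ ≤ (1 + K * ‖ℓ‖ * ε) / ‖ℓ w‖ := by
    have h3 : ‖(ℓ w)⁻¹ + (K : ℂ)‖ ≤ ‖ℓ w‖⁻¹ + K := by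
      refine (norm_add_le _ _).trans_eq ?_
      rw [norm_inv, Complex.norm_real, Real.norm_of_nonneg hK.le]
    refine h3.trans ?_
    rw [le_div_iff₀ h0, add_mul, inv_mul_cancel₀ h0.ne', mul_assoc K]
    gcongr
    exact (ℓ.le_opNorm w).trans (by gcongr)
  rw [Complex.inv_re, Complex.normSq_eq_norm_sq, div_le_div_iff₀ (by positivity) (by positivity)]
  calc c * ‖w‖ ^ 2 * ‖(ℓ w)⁻¹ + K‖ ^ 2 ≤ c * ‖w‖ ^ 2 * ((1 + K * ‖ℓ‖ * ε) / ‖ℓ w‖) ^ 2 := by gcongr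
    _ = c * ‖w‖ ^ 2 / ‖ℓ w‖ ^ 2 * (1 + K * ‖ℓ‖ * ε) ^ 2 := by rw [div_pow]; ring
    _ ≤ _ := by gcongr

theorem exists_norm_le (hD : IsModelDomain Ω ℓ c K ε) : ∃ B : ℝ, 0 < B ∧ ∀ z ∈ Ω, ‖z‖ ≤ B := by
  obtain ⟨B, hB⟩ := hD.isBounded.exists_norm_le
  exact ⟨max B 1, by positivity, fun z hz => (hB z hz).trans (le_max_left _ _)⟩

theorem inv_smul_mem (hD : IsModelDomain Ω ℓ c K ε) {u : E} (hu : ℓ u = 1) {X : ℂ}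
    (hX : K * ‖u‖ ^ 2 < X.re) : X⁻¹ • u ∈ Ω := by
  have hK := hD.K_pos
  have hX0 : X ≠ 0 := fun h => by
    rw [h, Complex.zero_re] at hX
    have : 0 ≤ K * ‖u‖ ^ 2 := by positivity
    linarith
  have h0 : 0 < ‖X‖ := norm_pos_iff.2 hX0
  apply hD.inner
  rw [map_smul, hu, smul_eq_mul, mul_one, norm_smul, norm_inv, Complex.inv_re,
    Complex.normSq_eq_norm_sq, mul_pow, inv_pow, lt_div_iff₀ (by positivity)]
  calc _ = K * ‖u‖ ^ 2 := by field_simp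
    _ < _ := hX

/-- Self maps tangent to the identity do not move horospheres at the origin too far, uniformly in
the map. -/
theorem exists_horosphere (hD : IsModelDomain Ω ℓ c K ε) :
    ∃ C₁ : ℝ, K ≤ C₁ ∧ ∀ f, IsTangentSelfMap Ω f → ∀ z, C₁ * ‖z‖ ^ 2 < (ℓ z).re →
      ‖f z‖ < ε ∧ (ℓ z).re - C₁ * ‖z‖ ^ 2 ≤ ‖ℓ z‖ ^ 2 * ((ℓ (f z))⁻¹).re := by
  have hK := hD.K_pos
  have hε := hD.ε_pos
  have hc := hD.c_pos
  obtain ⟨B, hB, hΩB⟩ := hD.exists_norm_le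
  obtain ⟨T, hT, hcore⟩ := exists_horosphere_const (E := E) (B := B) (ε := ε)
    (κ := c * (ε / 4) ^ 2 / (1 + K * ‖ℓ‖ * ε) ^ 2) hB hε (by positivity)
  have hℓ0 := norm_nonneg ℓ
  refine ⟨2 * K + (T + K) * ‖ℓ‖ ^ 2, by
    have : 0 ≤ (T + K) * ‖ℓ‖ ^ 2 := by positivity
    linarith, ?_⟩
  set C₁ := 2 * K + (T + K) * ‖ℓ‖ ^ 2 with hC₁
  have hC₁0 : 0 < C₁ := by positivity
  intro f hf z hz
  have hℓz : ℓ z ≠ 0 := fun h0 => by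
    rw [h0, Complex.zero_re] at hz
    have : 0 ≤ C₁ * ‖z‖ ^ 2 := by positivity
    linarith
  have hℓzp : 0 < ‖ℓ z‖ := norm_pos_iff.2 hℓz
  set u : E := (ℓ z)⁻¹ • z with hu
  have hℓu : ℓ u = 1 := by rw [hu, map_smul, smul_eq_mul, inv_mul_cancel₀ hℓz]
  have hu1 : 1 ≤ ‖ℓ‖ * ‖u‖ := by
    have := ℓ.le_opNorm u; rwa [hℓu, norm_one] at this
  have hu0 : 0 < ‖u‖ := by
    by_contra! h
    nlinarith
  have hA0 : 0 ≤ K * ‖u‖ ^ 2 := by positivity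
  have hmem : ∀ X : ℂ, K * ‖u‖ ^ 2 < X.re → X⁻¹ • u ∈ Ω := fun X hX => hD.inv_smul_mem hℓu hX
  have hXne : ∀ X : ℂ, K * ‖u‖ ^ 2 < X.re → X ≠ 0 := fun X hX h => by
    rw [h, Complex.zero_re] at hX; linarith
  have hgd : ∀ X : ℂ, K * ‖u‖ ^ 2 < X.re → DifferentiableAt ℂ (fun X : ℂ => f (X⁻¹ • u)) X := by
    intro X hX
    have h1 : DifferentiableAt ℂ f (X⁻¹ • u) :=
      hf.differentiableOn.differentiableAt (hD.isOpen.mem_nhds (hmem X hX))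
    exact h1.comp X ((differentiableAt_inv (hXne X hX)).smul_const u)
  obtain ⟨R, hR⟩ : ∃ R : ℝ, ∀ X : ℂ, K * ‖u‖ ^ 2 < X.re → R ≤ ‖X‖ →
      ‖f (X⁻¹ • u)‖ < ε / 2 ∧ X.re ≤ ((ℓ (f (X⁻¹ • u)))⁻¹ + K).re := by
    set δ : ℝ := K / (2 * ((‖ℓ‖ + 1) * ‖u‖ ^ 2)) with hδdef
    have hδ : 0 < δ := by positivity
    have h1 := hf.isLittleO.def hδ
    have h2 : ∀ᶠ w in 𝓝[Ω] (0 : E), ‖f w‖ < ε / 2 := by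
      have := (hf.tendsto.mono_right nhdsWithin_le_nhds).norm
      rw [norm_zero] at this
      exact this.eventually_lt_const (by positivity)
    obtain ⟨η, hη, h3⟩ := Metric.mem_nhdsWithin_iff.1 (h1.and h2)
    refine ⟨max (K + 1) (‖u‖ / η + 1), fun X hX hXR => ?_⟩
    have hXK : K + 1 ≤ ‖X‖ := (le_max_left _ _).trans hXR
    have hXη : ‖u‖ / η < ‖X‖ := by linarith [(le_max_right (K + 1) (‖u‖ / η + 1)).trans hXR]
    have hXp : 0 < ‖X‖ := by linarith
    have hX0 : X ≠ 0 := hXne X hX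
    have hw : ‖X⁻¹ • u‖ = ‖u‖ / ‖X‖ := by rw [norm_smul, norm_inv]; field_simp
    obtain ⟨h4, h5⟩ := h3 (show X⁻¹ • u ∈ ball 0 η ∩ Ω from ⟨by
      rw [mem_ball_zero_iff, hw, div_lt_iff₀ hXp]
      rwa [div_lt_iff₀ hη, mul_comm] at hXη, hmem X hX⟩)
    refine ⟨h5, ?_⟩
    set w := X⁻¹ • u with hwdef
    have hfw : f w ∈ Ω := hf.mapsTo (hmem X hX)
    have hne := hD.normal_ne_zero hfw (by linarith)
    have hℓw : ℓ w = X⁻¹ := by rw [hwdef, map_smul, hℓu, smul_eq_mul, mul_one]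
    set e : ℂ := ℓ (f w) - X⁻¹ with he
    have h6 : ‖e‖ * ‖X‖ ^ 2 ≤ K / 2 := by
      have : e = ℓ (f w - w) := by rw [map_sub, hℓw]
      rw [this]
      simp only [norm_pow, norm_norm] at h4
      calc ‖ℓ (f w - w)‖ * ‖X‖ ^ 2 ≤ (‖ℓ‖ + 1) * (δ * ‖w‖ ^ 2) * ‖X‖ ^ 2 := by
            gcongr
            refine (ℓ.le_opNorm _).trans ?_
            gcongr
            linarith
        _ = (‖ℓ‖ + 1) * ‖u‖ ^ 2 * δ := by rw [hw]; field_simp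
        _ = K / 2 := by rw [hδdef]; field_simp
    have h7 : ‖e * X‖ ≤ 1 / 2 := by
      rw [norm_mul]
      have h8 : ‖e‖ * ‖X‖ * ‖X‖ ≤ K / 2 := by rw [mul_assoc, ← pow_two]; exact h6
      have h9 : 0 ≤ ‖e‖ * ‖X‖ := by positivity
      nlinarith
    have h10 : 1 / 2 ≤ ‖1 + e * X‖ := by
      have := norm_sub_norm_le (1 : ℂ) (-(e * X))
      rw [norm_neg, norm_one, sub_neg_eq_add] at this
      linarith
    have h1eX : (1 + e * X) ≠ 0 := fun h => by rw [h, norm_zero] at h10; norm_num at h10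
    have h11 : (ℓ (f w))⁻¹ - X = -(e * X ^ 2 / (1 + e * X)) := by
      have h12 : ℓ (f w) * X = 1 + e * X := by rw [he]; field_simp; ring
      have h13 : (ℓ (f w))⁻¹ = X / (1 + e * X) := by rw [← h12]; field_simp
      rw [h13, sub_eq_iff_eq_add, div_eq_iff h1eX, add_mul, neg_mul, div_mul_cancel₀ _ h1eX]; ring
    have h14 : ‖(ℓ (f w))⁻¹ - X‖ ≤ K := by
      rw [h11, norm_neg, norm_div, norm_mul, norm_pow, div_le_iff₀ (by linarith)]
      nlinarith
    have h15 := (Complex.abs_re_le_norm _).trans h14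
    rw [Complex.sub_re, abs_le] at h15
    rw [Complex.add_re, Complex.ofReal_re]
    linarith
  have hmain := hcore (K * ‖u‖ ^ 2) R (fun X => f (X⁻¹ • u)) (fun X => (ℓ (f (X⁻¹ • u)))⁻¹ + K)
    hA0 hgd (fun X hX => hΩB _ (hf.mapsTo (hmem X hX)))
    (fun X hX hXε => by
      have h1 : DifferentiableAt ℂ (fun X : ℂ => ℓ (f (X⁻¹ • u))) X :=
        ℓ.differentiableAt.comp X (hgd X hX)
      exact (h1.inv (hD.normal_ne_zero (hf.mapsTo (hmem X hX)) hXε)).add_const _)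
    (fun X hX hXε => hD.re_inv_normal_pos (hf.mapsTo (hmem X hX)) hXε)
    (fun X hX hXε hXε4 => by
      refine le_trans ?_ (hD.le_re_inv_inv_normal (hf.mapsTo (hmem X hX)) hXε)
      gcongr) hR (ℓ z)⁻¹
  have hz' : (ℓ z)⁻¹⁻¹ • u = z := by rw [inv_inv, hu, smul_inv_smul₀ hℓz]
  rw [hz'] at hmain
  have hre : ((ℓ z)⁻¹).re = (ℓ z).re / ‖ℓ z‖ ^ 2 := by
    rw [Complex.inv_re, Complex.normSq_eq_norm_sq]
  have hun : ‖u‖ ^ 2 = ‖z‖ ^ 2 / ‖ℓ z‖ ^ 2 := by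
    rw [hu, norm_smul, norm_inv]; field_simp
  have hcmp : 2 * (K * ‖u‖ ^ 2) + T + K ≤ C₁ * ‖u‖ ^ 2 := by
    have : 1 ≤ ‖ℓ‖ ^ 2 * ‖u‖ ^ 2 := by
      rw [← mul_pow]; exact one_le_pow₀ hu1
    rw [hC₁]; nlinarith
  have hlt : C₁ * ‖u‖ ^ 2 < ((ℓ z)⁻¹).re := by
    rw [hre, hun, lt_div_iff₀ (by positivity)]
    calc _ = C₁ * ‖z‖ ^ 2 := by field_simp
      _ < _ := hz
  obtain ⟨h1, h2⟩ := hmain (by linarith)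
  refine ⟨by linarith, ?_⟩
  rw [Complex.add_re, Complex.ofReal_re] at h2
  have h3 : ((ℓ z)⁻¹).re - C₁ * ‖u‖ ^ 2 ≤ ((ℓ (f z))⁻¹).re := by linarith
  rw [hre, hun] at h3
  calc (ℓ z).re - C₁ * ‖z‖ ^ 2
      = ‖ℓ z‖ ^ 2 * ((ℓ z).re / ‖ℓ z‖ ^ 2 - C₁ * (‖z‖ ^ 2 / ‖ℓ z‖ ^ 2)) := by field_simp
    _ ≤ _ := by gcongr

end IsModelDomain

/-! ### Iterates close to the boundary point -/

theorem norm_iterate_sub_le {F : E → E} {x w : E} {r η : ℝ} (hη : ∀ y ∈ ball x r, ‖F y - y‖ ≤ η)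
    (hw : w ∈ ball x (r / 2)) {k : ℕ} (hk : k * η ≤ r / 2) : ‖F^[k] w - w‖ ≤ k * η := by
  have hr : 0 < r / 2 := nonempty_ball.1 ⟨w, hw⟩
  have hη0 : 0 ≤ η := (norm_nonneg _).trans (hη x (mem_ball_self (by linarith)))
  induction k with
  | zero => simp
  | succ k ih =>
    push_cast at hk ⊢
    have h1 := ih (by linarith)
    have h2 : F^[k] w ∈ ball x r := by
      rw [mem_ball, dist_eq_norm] at hw ⊢
      have : F^[k] w - x = (F^[k] w - w) + (w - x) := by abel
      rw [this]
      linarith [norm_add_le (F^[k] w - w) (w - x)]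
    rw [iterate_succ_apply']
    have h3 := hη _ h2
    have : F (F^[k] w) - w = (F (F^[k] w) - F^[k] w) + (F^[k] w - w) := by abel
    rw [this]
    linarith [norm_add_le (F (F^[k] w) - F^[k] w) (F^[k] w - w)]

namespace IsModelDomain

variable {Ω : Set E} {ℓ : E →L[ℂ] ℂ} {c K ε : ℝ} {F : E → E}

/-- Around the points `s • u` with `s → 0⁺` there are balls of radius proportional to `s` inside
the domain, on which `F` is `o(s ^ 2)`-close to the identity. -/
theorem exists_ball_along_ray (hD : IsModelDomain Ω ℓ c K ε) {u : E} (hu : ℓ u = 1)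
    (hF : IsTangentSelfMap Ω F) :
    ∃ c₁ > 0, ∀ δ > 0, ∀ᶠ s : ℝ in 𝓝[>] 0, 0 < s ∧ ball ((s : ℂ) • u) (c₁ * s) ⊆ Ω ∧
      ∀ w ∈ ball ((s : ℂ) • u) (c₁ * s), ‖F w - w‖ ≤ δ * s ^ 2 := by
  have hK := hD.K_pos
  set c₁ : ℝ := 1 / (2 * (‖ℓ‖ + 1)) with hc₁
  have hc₁0 : 0 < c₁ := by positivity
  refine ⟨c₁, hc₁0, fun δ hδ => ?_⟩
  set L : ℝ := ‖u‖ + c₁ with hL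
  have hL0 : 0 < L := by positivity
  obtain ⟨η, hη, h3⟩ := Metric.mem_nhdsWithin_iff.1
    (hF.isLittleO.def (show 0 < δ / L ^ 2 by positivity))
  filter_upwards [self_mem_nhdsWithin,
    nhdsWithin_le_nhds (gt_mem_nhds (show 0 < 1 / (2 * (K * L ^ 2)) by positivity)),
    nhdsWithin_le_nhds (gt_mem_nhds (show 0 < η / L by positivity))] with s hs hs1 hs2
  replace hs : 0 < s := hs
  rw [lt_div_iff₀ (by positivity)] at hs1 hs2
  have hnorm : ∀ w ∈ ball ((s : ℂ) • u) (c₁ * s), ‖w‖ < L * s := by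
    intro w hw
    rw [mem_ball, dist_eq_norm] at hw
    have h1 : ‖(s : ℂ) • u‖ = s * ‖u‖ := by
      rw [norm_smul, Complex.norm_real, Real.norm_of_nonneg hs.le]
    have h2 := norm_sub_norm_le w ((s : ℂ) • u)
    rw [hL]; nlinarith
  have hsub : ball ((s : ℂ) • u) (c₁ * s) ⊆ Ω := by
    intro w hw
    apply hD.inner
    have h1 := hnorm w hw
    have h2 : ‖ℓ (w - (s : ℂ) • u)‖ ≤ s / 2 := by
      rw [mem_ball, dist_eq_norm] at hw
      refine (ℓ.le_opNorm _).trans ?_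
      calc ‖ℓ‖ * ‖w - (s : ℂ) • u‖ ≤ (‖ℓ‖ + 1) * (c₁ * s) := by gcongr; linarith
        _ = s / 2 := by rw [hc₁]; field_simp
    have h4 := (Complex.abs_re_le_norm _).trans h2
    rw [map_sub, map_smul, hu, smul_eq_mul, mul_one, Complex.sub_re, Complex.ofReal_re,
      abs_le] at h4
    have h5 : ‖w‖ ^ 2 < (L * s) ^ 2 := by gcongr
    have h6 : K * ‖w‖ ^ 2 < K * (L * s) ^ 2 := by gcongr
    have h7 : K * (L * s) ^ 2 < s / 2 := by nlinarith
    linarith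
  refine ⟨hs, hsub, fun w hw => ?_⟩
  have h1 := hnorm w hw
  have h4 := h3 (show w ∈ ball 0 η ∩ Ω from ⟨by rw [mem_ball_zero_iff]; nlinarith, hsub hw⟩)
  replace h4 : ‖F w - w‖ ≤ δ / L ^ 2 * ‖‖w‖ ^ 2‖ := h4
  rw [norm_pow, norm_norm] at h4
  refine h4.trans ?_
  calc δ / L ^ 2 * ‖w‖ ^ 2 ≤ δ / L ^ 2 * (L * s) ^ 2 := by gcongr
    _ = δ * s ^ 2 := by field_simp

theorem eventually_norm_fderiv_iterate_sub_le (hD : IsModelDomain Ω ℓ c K ε) {u : E} (hu : ℓ u = 1)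
    (hF : IsTangentSelfMap Ω F) {M δ : ℝ} (hM : 0 < M) (hδ : 0 < δ) :
    ∀ᶠ s : ℝ in 𝓝[>] 0, ∀ k : ℕ, k * s ≤ M →
      ‖fderiv ℂ F^[k] ((s : ℂ) • u) - ContinuousLinearMap.id ℂ E‖ ≤ δ := by
  obtain ⟨c₁, hc₁, h⟩ := hD.exists_ball_along_ray hu hF
  set δ' : ℝ := min (c₁ / (2 * M)) (δ * c₁ / (4 * M)) with hδ'
  have hδ'0 : 0 < δ' := by positivity
  filter_upwards [h δ' hδ'0] with s ⟨hs, hsub, hest⟩ k hk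
  have h1 : δ' * M ≤ c₁ / 2 := by
    calc δ' * M ≤ c₁ / (2 * M) * M := by gcongr; exact min_le_left _ _
      _ = c₁ / 2 := by field_simp
  have h2 : δ' * M ≤ δ * c₁ / 4 := by
    calc δ' * M ≤ δ * c₁ / (4 * M) * M := by gcongr; exact min_le_right _ _
      _ = δ * c₁ / 4 := by field_simp
  have h3 : k * (δ' * s ^ 2) ≤ δ' * M * s := by
    calc k * (δ' * s ^ 2) = δ' * (k * s) * s := by ring
      _ ≤ _ := by gcongr
  have h4 : k * (δ' * s ^ 2) ≤ c₁ * s / 2 := by nlinarith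
  have hr : 0 < c₁ * s / 2 := by positivity
  have hsub' : ball ((s : ℂ) • u) (c₁ * s / 2) ⊆ Ω :=
    (ball_subset_ball (by linarith)).trans hsub
  have hdk : DifferentiableOn ℂ F^[k] Ω := (hF.iterate k).differentiableOn
  have h5 := norm_fderiv_le_of_norm_le_on_ball (f := fun w => F^[k] w - w) (x := (s : ℂ) • u)
    (r := c₁ * s / 2) (M := k * (δ' * s ^ 2)) hr ((hdk.mono hsub').sub differentiableOn_id)
    (fun w hw => norm_iterate_sub_le hest hw h4)
  have h6 : fderiv ℂ (fun w => F^[k] w - w) ((s : ℂ) • u) =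
      fderiv ℂ F^[k] ((s : ℂ) • u) - ContinuousLinearMap.id ℂ E := by
    rw [fderiv_fun_sub (hdk.differentiableAt (hD.isOpen.mem_nhds (hsub' (mem_ball_self hr))))
      differentiableAt_fun_id, fderiv_fun_id]
  rw [h6] at h5
  refine h5.trans ?_
  rw [div_le_iff₀ hr]
  nlinarith

theorem eventually_half_le_norm_det_fderiv_iterate [FiniteDimensional ℂ E]
    (hD : IsModelDomain Ω ℓ c K ε) {u : E} (hu : ℓ u = 1)
    (hF : IsTangentSelfMap Ω F) {M : ℝ} (hM : 0 < M) :
    ∀ᶠ s : ℝ in 𝓝[>] 0, ∀ k : ℕ, k * s ≤ M → 1 / 2 ≤ ‖(fderiv ℂ F^[k] ((s : ℂ) • u)).det‖ := by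
  have h1 : ∀ᶠ T : E →L[ℂ] E in 𝓝 (ContinuousLinearMap.id ℂ E), 1 / 2 < ‖T.det‖ := by
    have hc := (ContinuousLinearMap.continuous_det (𝕜 := ℂ) (E := E)).norm
    refine hc.continuousAt.eventually_const_lt ?_
    have : (ContinuousLinearMap.id ℂ E).det = 1 := by
      simp [ContinuousLinearMap.det]
    simp only [this, norm_one]; norm_num
  obtain ⟨δ, hδ, h2⟩ := Metric.eventually_nhds_iff_ball.1 h1
  filter_upwards [hD.eventually_norm_fderiv_iterate_sub_le hu hF hM (half_pos hδ)] with s hs k hk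
  refine (h2 _ ?_).le
  rw [mem_ball, dist_eq_norm]
  linarith [hs k hk]

end IsModelDomain

/-! ### Determinant bounds by anisotropic rescaling -/

/-- The anisotropic dilation scaling the normal direction by `b ^ 2` and the tangential ones
by `b`. -/
def dilation (ℓ : E →L[ℂ] ℂ) (e : E) (b : ℝ) : E →L[ℂ] E :=
  ((b ^ 2 : ℝ) : ℂ) • ℓ.smulRight e + (b : ℂ) • (ContinuousLinearMap.id ℂ E - ℓ.smulRight e)

theorem dilation_apply (ℓ : E →L[ℂ] ℂ) (e : E) (b : ℝ) (z : E) :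
    dilation ℓ e b z = ((b ^ 2 : ℝ) : ℂ) • ℓ z • e + (b : ℂ) • (z - ℓ z • e) := by
  simp [dilation]

theorem normal_dilation {ℓ : E →L[ℂ] ℂ} {e : E} (he : ℓ e = 1) (b : ℝ) (z : E) :
    ℓ (dilation ℓ e b z) = ((b ^ 2 : ℝ) : ℂ) * ℓ z := by
  rw [dilation_apply]; simp [he]

theorem dilation_comp {ℓ : E →L[ℂ] ℂ} {e : E} (he : ℓ e = 1) (a b : ℝ) :
    (dilation ℓ e a).comp (dilation ℓ e b) = dilation ℓ e (a * b) := by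
  ext z
  rw [ContinuousLinearMap.comp_apply, dilation_apply (b := a), normal_dilation he,
    dilation_apply, dilation_apply]
  push_cast
  module

theorem dilation_one (ℓ : E →L[ℂ] ℂ) (e : E) : dilation ℓ e 1 = ContinuousLinearMap.id ℂ E := by
  ext z
  rw [dilation_apply]; simp

theorem norm_dilation_le_of_le_one (ℓ : E →L[ℂ] ℂ) (e : E) {b : ℝ} (hb : 0 ≤ b) (hb1 : b ≤ 1) :
    ‖dilation ℓ e b‖ ≤ b * (‖ℓ.smulRight e‖ + ‖ContinuousLinearMap.id ℂ E - ℓ.smulRight e‖) := by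
  refine (norm_add_le _ _).trans ?_
  rw [norm_smul, norm_smul, Complex.norm_real, Complex.norm_real, Real.norm_of_nonneg hb,
    Real.norm_of_nonneg (by positivity), mul_add]
  gcongr
  nlinarith

theorem norm_dilation_le_of_one_le (ℓ : E →L[ℂ] ℂ) (e : E) {b : ℝ} (hb1 : 1 ≤ b) :
    ‖dilation ℓ e b‖ ≤
      b ^ 2 * (‖ℓ.smulRight e‖ + ‖ContinuousLinearMap.id ℂ E - ℓ.smulRight e‖) := by
  refine (norm_add_le _ _).trans ?_
  have hb : 0 ≤ b := by linarith
  rw [norm_smul, norm_smul, Complex.norm_real, Complex.norm_real, Real.norm_of_nonneg hb,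
    Real.norm_of_nonneg (by positivity), mul_add]
  gcongr
  nlinarith

theorem exists_norm_det_dilation_le [FiniteDimensional ℂ E] (ℓ : E →L[ℂ] ℂ) (e : E) :
    ∃ C > 0, ∀ b : ℝ, 1 ≤ b →
      ‖(dilation ℓ e b).det‖ ≤ C * (b ^ 2) ^ Module.finrank ℂ E := by
  obtain ⟨C, hC, h⟩ := exists_norm_det_le (E := E)
    (‖ℓ.smulRight e‖ + ‖ContinuousLinearMap.id ℂ E - ℓ.smulRight e‖)
  refine ⟨C, hC, fun b hb => ?_⟩
  have hb0 : 0 < b := by linarith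
  have h1 := h ((((b ^ 2)⁻¹ : ℝ) : ℂ) • dilation ℓ e b) (by
    rw [norm_smul, Complex.norm_real, Real.norm_of_nonneg (by positivity),
      inv_mul_le_iff₀ (by positivity)]
    exact norm_dilation_le_of_one_le ℓ e hb)
  rw [ContinuousLinearMap.det, ContinuousLinearMap.toLinearMap_smul, LinearMap.det_smul,
    norm_mul, norm_pow, Complex.norm_real, Real.norm_of_nonneg (by positivity), inv_pow,
    inv_mul_le_iff₀ (by positivity), mul_comm] at h1
  exact h1

theorem det_comp (S T : E →L[ℂ] E) : (S.comp T).det = S.det * T.det := by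
  simp [ContinuousLinearMap.det]

namespace IsModelDomain

variable {Ω : Set E} {ℓ : E →L[ℂ] ℂ} {c K ε : ℝ} {F : E → E}

set_option maxHeartbeats 400000 in
/-- Jacobian determinants of tangent self maps are bounded along the disc through `e`, uniformly
in the map. -/
theorem exists_norm_det_fderiv_le [FiniteDimensional ℂ E] (hD : IsModelDomain Ω ℓ c K ε) {e : E}
    (he : ℓ e = 1) :
    ∃ C₂ > 0, K * ‖e‖ ^ 2 < C₂ ∧ ∃ C > 0, ∀ f, IsTangentSelfMap Ω f → ∀ X : ℂ, C₂ ≤ X.re →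
      ‖(fderiv ℂ f (X⁻¹ • e)).det‖ ≤ C * ((‖X‖ / X.re) ^ 2) ^ Module.finrank ℂ E := by
  have hK := hD.K_pos
  have hc := hD.c_pos
  obtain ⟨C₁, hC₁K, hhor⟩ := hD.exists_horosphere
  have hC₁ : 0 < C₁ := by linarith
  have he0 : 0 < ‖e‖ := norm_pos_iff.2 fun h => by simp [h] at he
  set P : ℝ := ‖ContinuousLinearMap.id ℂ E - ℓ.smulRight e‖ with hP
  set CS : ℝ := ‖ℓ.smulRight e‖ + P + 1 with hCS
  have hCS0 : 0 < CS := by positivity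
  set c₀ : ℝ := min (1 / (4 * (‖ℓ‖ + 1))) (1 / (CS * (16 * C₁ + 1))) with hc₀
  have hc₀0 : 0 < c₀ := by positivity
  have hc₀1 : ‖ℓ‖ * c₀ ≤ 1 / 4 := by
    calc ‖ℓ‖ * c₀ ≤ (‖ℓ‖ + 1) * (1 / (4 * (‖ℓ‖ + 1))) := by
          gcongr
          · linarith
          · exact min_le_left _ _
      _ = 1 / 4 := by field_simp
  have hc₀2 : 2 * C₁ * (CS * c₀) ^ 2 ≤ 1 / 8 := by
    have h1 : CS * c₀ ≤ 1 / (16 * C₁ + 1) := by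
      calc CS * c₀ ≤ CS * (1 / (CS * (16 * C₁ + 1))) := by gcongr; exact min_le_right _ _
        _ = _ := by field_simp
    have h2 : (CS * c₀) ^ 2 ≤ 1 / (16 * C₁ + 1) := by
      have h3 : 1 / (16 * C₁ + 1) ≤ 1 := by
        rw [div_le_one (by positivity)]; linarith
      have h4 : 0 ≤ CS * c₀ := by positivity
      nlinarith
    calc 2 * C₁ * (CS * c₀) ^ 2 ≤ 2 * C₁ * (1 / (16 * C₁ + 1)) := by gcongr
      _ ≤ 1 / 8 := by
        rw [mul_one_div, div_le_div_iff₀ (by positivity) (by positivity)]; linarith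
  set C₃ : ℝ := 8 * ‖e‖ + P * ((8 + 64 * K) / c + 1) with hC₃
  have hC₃0 : 0 < C₃ := by positivity
  obtain ⟨C₄, hC₄, hdet⟩ := exists_norm_det_le (E := E) (2 * C₃ / c₀)
  obtain ⟨C₅, hC₅, hdil⟩ := exists_norm_det_dilation_le ℓ e
  refine ⟨16 * C₁ * ‖e‖ ^ 2 + 1, by positivity, by nlinarith [sq_nonneg ‖e‖], C₄ * C₅,
    by positivity, ?_⟩
  intro f hf X hX
  have hXre : 1 ≤ X.re := by
    have : 0 ≤ 16 * C₁ * ‖e‖ ^ 2 := by positivity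
    linarith
  have hXle : X.re ≤ ‖X‖ := Complex.re_le_norm X
  have hXn : 1 ≤ ‖X‖ := hXre.trans hXle
  set b : ℝ := Real.sqrt (X.re / ‖X‖ ^ 2) with hb
  have hb2 : b ^ 2 = X.re / ‖X‖ ^ 2 := Real.sq_sqrt (by positivity)
  have hb0 : 0 < b := Real.sqrt_pos.2 (by positivity)
  have hb1 : b ≤ 1 := by
    rw [← sq_le_one_iff₀ hb0.le, hb2, div_le_one (by positivity)]; nlinarith
  have hbX : b ^ 2 * ‖X‖ ≤ 1 := by
    rw [hb2, pow_two, ← div_div, div_mul_cancel₀ _ (by positivity), div_le_one (by positivity)]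
    exact hXle
  set a : ℝ := Real.sqrt (1 / X.re) with ha
  have ha2 : a ^ 2 = 1 / X.re := Real.sq_sqrt (by positivity)
  have ha0 : 0 < a := Real.sqrt_pos.2 (by positivity)
  have ha1 : a ≤ 1 := by
    rw [← sq_le_one_iff₀ ha0.le, ha2, div_le_one (by positivity)]; exact hXre
  set z : E := X⁻¹ • e with hz
  have hℓz : ℓ z = X⁻¹ := by rw [hz, map_smul, he, smul_eq_mul, mul_one]
  have hℓzre : (ℓ z).re = b ^ 2 := by
    rw [hℓz, Complex.inv_re, Complex.normSq_eq_norm_sq, hb2]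
  -- the rescaled box around `z` is uniformly deep inside the horosphere
  have hbox : ∀ η ∈ ball (0 : E) c₀, z + dilation ℓ e b η ∈ Ω ∧
      ‖dilation ℓ e a⁻¹ (f (z + dilation ℓ e b η))‖ ≤ C₃ := by
    intro η hη
    rw [mem_ball_zero_iff] at hη
    set w : E := z + dilation ℓ e b η with hw
    have hℓη : ‖ℓ η‖ ≤ 1 / 4 := (ℓ.le_opNorm η).trans (le_trans (by gcongr) hc₀1)
    have hℓw : ℓ w = X⁻¹ + ((b ^ 2 : ℝ) : ℂ) * ℓ η := by rw [hw, map_add, hℓz, normal_dilation he]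
    have hbη : ‖((b ^ 2 : ℝ) : ℂ) * ℓ η‖ ≤ b ^ 2 / 4 := by
      rw [norm_mul, Complex.norm_real, Real.norm_of_nonneg (by positivity)]
      linarith [mul_le_mul_of_nonneg_left hℓη (sq_nonneg b)]
    have hb2X : b ^ 2 ≤ ‖X‖⁻¹ := by
      rw [← one_div, le_div_iff₀ (by positivity)]; exact hbX
    have hwn : ‖ℓ w‖ ≤ 2 * ‖X‖⁻¹ := by
      rw [hℓw]
      refine (norm_add_le _ _).trans ?_
      rw [norm_inv]; linarith [sq_nonneg b]
    have hwre : 3 / 4 * b ^ 2 ≤ (ℓ w).re := by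
      have h1 := (Complex.abs_re_le_norm _).trans hbη
      rw [hℓw, Complex.add_re, ← hℓz, hℓzre]
      rw [abs_le] at h1; linarith
    have hwnorm : C₁ * ‖w‖ ^ 2 ≤ b ^ 2 / 4 := by
      have h1 : ‖dilation ℓ e b η‖ ≤ b * (CS * c₀) := by
        refine ((dilation ℓ e b).le_opNorm η).trans ?_
        calc ‖dilation ℓ e b‖ * ‖η‖ ≤ (b * CS) * c₀ := by
              gcongr
              refine (norm_dilation_le_of_le_one ℓ e hb0.le hb1).trans ?_
              gcongr
              rw [hCS]; linarith
          _ = _ := by ring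
      have h2 : ‖z‖ = ‖e‖ / ‖X‖ := by rw [hz, norm_smul, norm_inv]; field_simp
      have h3 : ‖w‖ ^ 2 ≤ 2 * ‖z‖ ^ 2 + 2 * (b * (CS * c₀)) ^ 2 := by
        have h4 : ‖w‖ ≤ ‖z‖ + b * (CS * c₀) := (norm_add_le _ _).trans (by gcongr)
        have h5 : ‖w‖ ^ 2 ≤ (‖z‖ + b * (CS * c₀)) ^ 2 := by gcongr
        linarith [sq_nonneg (‖z‖ - b * (CS * c₀))]
      have h6 : C₁ * (2 * ‖z‖ ^ 2) ≤ b ^ 2 / 8 := by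
        rw [h2, hb2, div_pow]
        rw [mul_div_assoc', mul_div_assoc', div_div,
          div_le_div_iff₀ (by positivity) (by positivity)]
        have : 16 * C₁ * ‖e‖ ^ 2 ≤ X.re := by linarith
        linarith [mul_le_mul_of_nonneg_right this (sq_nonneg ‖X‖)]
      have h7 : C₁ * (2 * (b * (CS * c₀)) ^ 2) ≤ b ^ 2 / 8 := by
        calc C₁ * (2 * (b * (CS * c₀)) ^ 2) = b ^ 2 * (2 * C₁ * (CS * c₀) ^ 2) := by ring
          _ ≤ b ^ 2 * (1 / 8) := by gcongr
          _ = b ^ 2 / 8 := by ring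
      linarith [mul_le_mul_of_nonneg_left h3 hC₁.le]
    have hb20 : 0 < b ^ 2 := by positivity
    have hwΩ : w ∈ Ω := hD.inner w
      (by linarith [mul_le_mul_of_nonneg_right hC₁K (sq_nonneg ‖w‖), sq_nonneg ‖w‖])
    obtain ⟨h1, h2⟩ := hhor f hf w (by linarith)
    have hfw : f w ∈ Ω := hf.mapsTo hwΩ
    have hℓ0 := hD.normal_ne_zero hfw h1
    have hℓp : 0 < ‖ℓ (f w)‖ := norm_pos_iff.2 hℓ0
    have h3 : ‖ℓ (f w)‖ ≤ 8 * a ^ 2 := by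
      have h4 : b ^ 2 / 2 ≤ ‖ℓ w‖ ^ 2 * ‖ℓ (f w)‖⁻¹ := by
        have h5 := Complex.re_le_norm (ℓ (f w))⁻¹
        rw [norm_inv] at h5
        have h6 : ‖ℓ w‖ ^ 2 * ((ℓ (f w))⁻¹).re ≤ ‖ℓ w‖ ^ 2 * ‖ℓ (f w)‖⁻¹ := by gcongr
        linarith
      have h7 : ‖ℓ w‖ ^ 2 ≤ (2 * ‖X‖⁻¹) ^ 2 := by gcongr
      have h8 : b ^ 2 / 2 * ‖ℓ (f w)‖ ≤ (2 * ‖X‖⁻¹) ^ 2 := by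
        calc b ^ 2 / 2 * ‖ℓ (f w)‖ ≤ ‖ℓ w‖ ^ 2 * ‖ℓ (f w)‖⁻¹ * ‖ℓ (f w)‖ := by gcongr
          _ = ‖ℓ w‖ ^ 2 := by field_simp
          _ ≤ _ := h7
      rw [ha2]
      rw [hb2] at h8
      have h9 : X.re / ‖X‖ ^ 2 / 2 * ‖ℓ (f w)‖ * ‖X‖ ^ 2 ≤ (2 * ‖X‖⁻¹) ^ 2 * ‖X‖ ^ 2 := by gcongr
      have h10 : X.re / ‖X‖ ^ 2 / 2 * ‖ℓ (f w)‖ * ‖X‖ ^ 2 = X.re * ‖ℓ (f w)‖ / 2 := by field_simp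
      have h11 : (2 * ‖X‖⁻¹) ^ 2 * ‖X‖ ^ 2 = 4 := by field_simp; norm_num
      rw [h10, h11] at h9
      rw [mul_one_div, le_div_iff₀ (by positivity)]; linarith
    have h4 : ‖f w‖ ≤ ((8 + 64 * K) / c + 1) * a := by
      have h5 := hD.outer _ hfw h1
      have h6 := Complex.re_le_norm (ℓ (f w))
      have h7 : ‖ℓ (f w)‖ ^ 2 ≤ (8 * a ^ 2) ^ 2 := by gcongr
      have h8 : a ^ 4 ≤ a ^ 2 := by
        have : a ^ 2 ≤ 1 := by rw [sq_le_one_iff₀ ha0.le]; exact ha1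
        linarith [mul_le_mul_of_nonneg_left this (sq_nonneg a)]
      have h9 : c * ‖f w‖ ^ 2 ≤ (8 + 64 * K) * a ^ 2 := by
        have : K * ‖ℓ (f w)‖ ^ 2 ≤ K * (64 * a ^ 2) := by
          gcongr; linarith
        linarith
      have h10 : ‖f w‖ ^ 2 ≤ (8 + 64 * K) / c * a ^ 2 := by
        rw [div_mul_eq_mul_div, le_div_iff₀ hc]; linarith
      refine le_of_sq_le_sq ?_ (by positivity)
      rw [mul_pow]
      refine h10.trans ?_
      gcongr
      have : 0 ≤ (8 + 64 * K) / c := by positivity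
      linarith [sq_nonneg ((8 + 64 * K) / c)]
    refine ⟨hwΩ, ?_⟩
    rw [dilation_apply]
    refine (norm_add_le _ _).trans ?_
    rw [hC₃]
    gcongr
    · rw [norm_smul, norm_smul, Complex.norm_real, Real.norm_of_nonneg (by positivity), ← mul_assoc]
      gcongr
      rw [inv_pow, inv_mul_le_iff₀ (by positivity)]; linarith
    · have h5 : f w - ℓ (f w) • e = (ContinuousLinearMap.id ℂ E - ℓ.smulRight e) (f w) := by simp
      rw [h5, norm_smul, Complex.norm_real, Real.norm_of_nonneg (by positivity),
        inv_mul_le_iff₀ ha0]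
      refine (ContinuousLinearMap.le_opNorm _ _).trans ?_
      calc P * ‖f w‖ ≤ P * (((8 + 64 * K) / c + 1) * a) := by gcongr
        _ = _ := by ring
  have hzΩ : z ∈ Ω := by simpa using (hbox 0 (mem_ball_self hc₀0)).1
  have hfz : DifferentiableAt ℂ f z := hf.differentiableOn.differentiableAt (hD.isOpen.mem_nhds hzΩ)
  set B : E →L[ℂ] E := (dilation ℓ e a⁻¹).comp ((fderiv ℂ f z).comp (dilation ℓ e b)) with hB
  have hBn : ‖B‖ ≤ 2 * C₃ / c₀ := by
    have h1 := norm_fderiv_le_of_norm_le_on_ball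
      (f := fun η => dilation ℓ e a⁻¹ (f (z + dilation ℓ e b η))) (x := 0) (r := c₀) (M := C₃) hc₀0
      ((dilation ℓ e a⁻¹).differentiable.comp_differentiableOn
        (hf.differentiableOn.comp (by fun_prop) fun η hη => (hbox η hη).1))
      (fun η hη => (hbox η hη).2)
    have h2 : HasFDerivAt (fun η => dilation ℓ e a⁻¹ (f (z + dilation ℓ e b η))) B 0 := by
      have h3 : HasFDerivAt (fun η => z + dilation ℓ e b η) (dilation ℓ e b) 0 :=
        (dilation ℓ e b).hasFDerivAt.const_add z
      have h4 : HasFDerivAt f (fderiv ℂ f z) (z + dilation ℓ e b 0) := by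
        simpa using hfz.hasFDerivAt
      exact (dilation ℓ e a⁻¹).hasFDerivAt.comp 0 (h4.comp 0 h3)
    rwa [h2.fderiv] at h1
  have hdecomp : fderiv ℂ f z = (dilation ℓ e a).comp (B.comp (dilation ℓ e b⁻¹)) := by
    have h1 : (dilation ℓ e a).comp (dilation ℓ e a⁻¹) = ContinuousLinearMap.id ℂ E := by
      rw [dilation_comp he, mul_inv_cancel₀ ha0.ne', dilation_one]
    have h2 : (dilation ℓ e b).comp (dilation ℓ e b⁻¹) = ContinuousLinearMap.id ℂ E := by
      rw [dilation_comp he, mul_inv_cancel₀ hb0.ne', dilation_one]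
    rw [hB, ContinuousLinearMap.comp_assoc, ContinuousLinearMap.comp_assoc, h2,
      ← ContinuousLinearMap.comp_assoc, h1]
    simp
  have hab : a * b⁻¹ = ‖X‖ / X.re := by
    have h1 : (a * b⁻¹) ^ 2 = (‖X‖ / X.re) ^ 2 := by
      rw [mul_pow, inv_pow, ha2, hb2]; field_simp
    exact (pow_left_inj₀ (by positivity) (by positivity) two_ne_zero).1 h1
  rw [hdecomp, det_comp, det_comp, mul_left_comm, ← det_comp, dilation_comp he, norm_mul, hab,
    mul_assoc]
  gcongr
  · exact hdet B hBn
  · exact hdil _ ((one_le_div (by positivity)).2 hXle)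

end IsModelDomain

/-! ### The Jacobian determinant at the fixed point -/

section SelfMaps

variable {Ω : Set E} {F : E → E} {B : ℝ} {z₀ : E}

theorem differentiableOn_iterate (hF : DifferentiableOn ℂ F Ω) (hm : MapsTo F Ω Ω) (k : ℕ) :
    DifferentiableOn ℂ F^[k] Ω := by
  induction k with
  | zero => exact differentiableOn_id
  | succ k ih => exact ih.comp hF hm

theorem fderiv_iterate_succ (hΩ : IsOpen Ω) (hF : DifferentiableOn ℂ F Ω) (hm : MapsTo F Ω Ω)
    {z : E} (hz : z ∈ Ω) (k : ℕ) :
    fderiv ℂ F^[k + 1] z = (fderiv ℂ F (F^[k] z)).comp (fderiv ℂ F^[k] z) := by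
  rw [iterate_succ']
  exact fderiv_comp z (hF.differentiableAt (hΩ.mem_nhds (hm.iterate k hz)))
    ((differentiableOn_iterate hF hm k).differentiableAt (hΩ.mem_nhds hz))

theorem norm_iterate_sub_fixedPoint_le (hF : DifferentiableOn ℂ F Ω) (hm : MapsTo F Ω Ω)
    (hB : ∀ z ∈ Ω, ‖z‖ ≤ B) (hfix : F z₀ = z₀) {r : ℝ} (hr : ball z₀ r ⊆ Ω) {w : E}
    (hw : w ∈ ball z₀ r) (k : ℕ) : ‖F^[k] w - z₀‖ ≤ 2 * B / r * ‖w - z₀‖ := by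
  have h := norm_sub_le_of_norm_le_on_ball ((differentiableOn_iterate hF hm k).mono hr)
    (fun w hw => hB _ (hm.iterate k (hr hw))) hw
  rwa [iterate_fixed hfix k] at h

theorem exists_norm_det_fderiv_iterate_le_exp [FiniteDimensional ℂ E] (hΩ : IsOpen Ω)
    (hF : DifferentiableOn ℂ F Ω) (hm : MapsTo F Ω Ω) (hB : ∀ z ∈ Ω, ‖z‖ ≤ B) (hz₀ : z₀ ∈ Ω)
    (hfix : F z₀ = z₀) (hdet : ‖(fderiv ℂ F z₀).det‖ < 1) :
    ∃ r > 0, ∃ C > 0, ∃ c > 0, ∀ k : ℕ, ∀ w ∈ ball z₀ r,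
      ‖(fderiv ℂ F^[k] w).det‖ ≤ C * Real.exp (-c * k) := by
  obtain ⟨θ, hθ1, hθ2⟩ := exists_between hdet
  have hθ0 : 0 < θ := (norm_nonneg _).trans_lt hθ1
  have hcont := ((differentiableOn_det_fderiv hΩ hF).continuousOn.continuousAt
    (hΩ.mem_nhds hz₀)).norm
  obtain ⟨r₁, hr₁, h₁⟩ := Metric.eventually_nhds_iff_ball.1 (hcont.eventually_lt_const hθ1)
  obtain ⟨r₀, hr₀, h₀⟩ := Metric.isOpen_iff.1 hΩ z₀ hz₀
  have hB0 : 0 ≤ B := (norm_nonneg _).trans (hB _ hz₀)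
  set A : ℝ := 2 * B / r₀ + 1 with hA
  have hA0 : 0 < A := by positivity
  refine ⟨min r₀ (r₁ / A), by positivity, 1, one_pos, -Real.log θ, by
    linarith [Real.log_neg hθ0 hθ2], fun k w hw => ?_⟩
  have hwr₀ : w ∈ ball z₀ r₀ := ball_subset_ball (min_le_left _ _) hw
  have hstay : ∀ j, F^[j] w ∈ ball z₀ r₁ := fun j => by
    have h2 := norm_iterate_sub_fixedPoint_le hF hm hB hfix h₀ hwr₀ j
    have h3 : ‖w - z₀‖ < r₁ / A := by
      rw [← dist_eq_norm]; exact (mem_ball.1 hw).trans_le (min_le_right _ _)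
    rw [lt_div_iff₀ hA0] at h3
    rw [mem_ball, dist_eq_norm]
    nlinarith [norm_nonneg (w - z₀)]
  have hpow : ‖(fderiv ℂ F^[k] w).det‖ ≤ θ ^ k := by
    induction k with
    | zero => simp [ContinuousLinearMap.det]
    | succ k ih =>
      rw [fderiv_iterate_succ hΩ hF hm (h₀ hwr₀), det_comp, norm_mul, pow_succ']
      gcongr
      exact (h₁ _ (hstay k)).le
  refine hpow.trans (le_of_eq ?_)
  rw [one_mul, neg_neg, mul_comm, Real.exp_nat_mul, Real.exp_log hθ0]

theorem exists_ball_norm_det_fderiv_iterate_le [FiniteDimensional ℂ E] (hΩ : IsOpen Ω)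
    (hF : DifferentiableOn ℂ F Ω) (hm : MapsTo F Ω Ω) (hB : ∀ z ∈ Ω, ‖z‖ ≤ B) {x : E}
    (hx : x ∈ Ω) :
    ∃ r > 0, ∃ M : ℝ, ∀ k, ∀ w ∈ ball x r, ‖(fderiv ℂ F^[k] w).det‖ ≤ M := by
  obtain ⟨r, hr, h⟩ := Metric.isOpen_iff.1 hΩ x hx
  obtain ⟨C, hC, hdet⟩ := exists_norm_det_le (E := E) (2 * B / (r / 2))
  refine ⟨r / 2, by positivity, C, fun k w hw => hdet _ ?_⟩
  have hsub : ball w (r / 2) ⊆ Ω := (ball_subset_ball' (by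
    rw [mem_ball] at hw; linarith)).trans h
  exact norm_fderiv_le_of_norm_le_on_ball (by positivity)
    ((differentiableOn_iterate hF hm k).mono hsub) fun w hw => hB _ (hm.iterate k (hsub hw))

end SelfMaps

namespace IsModelDomain

variable {Ω : Set E} {ℓ : E →L[ℂ] ℂ} {c K ε : ℝ} {F : E → E} {e z₀ : E}

theorem exists_norm_det_fderiv_iterate_le_exp_of_det_lt_one [FiniteDimensional ℂ E]
    (hD : IsModelDomain Ω ℓ c K ε) (he : ℓ e = 1) (hF : IsTangentSelfMap Ω F) (hz₀ : z₀ ∈ Ω)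
    (hfix : F z₀ = z₀) (hdet : ‖(fderiv ℂ F z₀).det‖ < 1) :
    ∃ C₂ > 0, ∃ C > 0, ∃ γ > 0, ∀ σ : ℝ, 0 < σ → 2 * σ ≤ 1 → ∀ k : ℕ,
      ‖(fderiv ℂ F^[k] ((((2 * σ)⁻¹ + C₂)⁻¹ : ℝ) • e)).det‖ ≤ C * Real.exp (-γ * k * σ) := by
  obtain ⟨B, hB0, hB⟩ := hD.exists_norm_le
  obtain ⟨C₂, hC₂, hC₂K, C, hC, hline⟩ := hD.exists_norm_det_fderiv_le he
  have hre : ∀ Y : ℂ, 0 ≤ Y.re → C₂ ≤ (Y⁻¹ + C₂).re := fun Y hY => by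
    rw [Complex.add_re, Complex.inv_re, Complex.ofReal_re]
    have : 0 ≤ Y.re / normSq Y := div_nonneg hY (normSq_nonneg Y)
    linarith
  have hne : ∀ Y : ℂ, 0 ≤ Y.re → Y⁻¹ + C₂ ≠ 0 := fun Y hY h => by
    have := hre Y hY
    rw [h, Complex.zero_re] at this
    linarith
  set α : ℂ → E := fun Y => (Y⁻¹ + (C₂ : ℂ))⁻¹ • e with hα
  have hαΩ : ∀ Y : ℂ, 0 ≤ Y.re → α Y ∈ Ω := fun Y hY =>
    hD.inv_smul_mem he (hC₂K.trans_le (hre Y hY))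
  have hαd : ∀ Y : ℂ, Y ≠ 0 → 0 ≤ Y.re → DifferentiableAt ℂ α Y := fun Y hY hY' => by
    have := hne Y hY'
    have h1 : DifferentiableAt ℂ (fun Y : ℂ => (Y⁻¹ + (C₂ : ℂ))⁻¹) Y :=
      ((differentiableAt_inv hY).add_const _).inv this
    exact h1.smul_const e
  have hcpt : IsCompact {Y : ℂ | 0 ≤ Y.re ∧ ‖Y‖ = 1} := by
    have : {Y : ℂ | 0 ≤ Y.re ∧ ‖Y‖ = 1} = sphere 0 1 ∩ {Y : ℂ | 0 ≤ Y.re} := by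
      ext Y; simp [and_comm]
    rw [this]
    exact (isCompact_sphere 0 1).inter_right (isClosed_le continuous_const Complex.continuous_re)
  have hKc : IsCompact (α '' {Y : ℂ | 0 ≤ Y.re ∧ ‖Y‖ = 1}) := by
    refine hcpt.image_of_continuousOn fun Y hY => ?_
    refine (hαd Y ?_ hY.1).continuousAt.continuousWithinAt
    rintro rfl
    simp at hY
  obtain ⟨Ca, hCa, γ, hγ, harc⟩ := exists_exp_decay_on_compact hD.isOpen hD.isPreconnected
    (fun k => differentiableOn_det_fderiv hD.isOpen (hF.iterate k).differentiableOn)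
    (fun x hx => exists_ball_norm_det_fderiv_iterate_le hD.isOpen hF.differentiableOn hF.mapsTo
      hB hx) hz₀
    (exists_norm_det_fderiv_iterate_le_exp hD.isOpen hF.differentiableOn hF.mapsTo hB hz₀
      hfix hdet) hKc (by rintro _ ⟨Y, hY, rfl⟩; exact hαΩ Y hY.1)
  set n := Module.finrank ℂ E
  set C' : ℝ := max (C * ((1 + C₂) ^ 2) ^ n) Ca with hC'
  have hC'0 : 0 < C' := lt_max_of_lt_right hCa
  refine ⟨C₂, hC₂, C' * (2 ^ 2) ^ n, by positivity, γ, hγ, fun σ hσ hσ1 k => ?_⟩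
  set h : ℂ → ℂ := fun Y => (fderiv ℂ F^[k] (α Y)).det * (((σ / Y) ^ 2) ^ n *
    Complex.exp (γ * k * (Y - σ))) with hh
  have hnorm : ∀ Y, ‖h Y‖ = ‖(fderiv ℂ F^[k] (α Y)).det‖ * (((σ / ‖Y‖) ^ 2) ^ n *
      Real.exp (γ * k * (Y.re - σ))) := fun Y => by
    rw [hh]
    simp only [norm_mul, norm_pow, norm_div, Complex.norm_real, Real.norm_of_nonneg hσ.le,
      Complex.norm_exp]
    congr 3
    simp
  have hbound : ‖h ((2 * σ : ℝ) : ℂ)‖ ≤ C' := by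
    refine norm_le_on_halfDisc (a := σ) (R := 1) ?_ ?_ ?_ ?_ ?_
    · intro Y hY _
      have hY0 : Y ≠ 0 := by rintro rfl; simp at hY; linarith
      have h1 : DifferentiableAt ℂ (fun Y => (fderiv ℂ F^[k] (α Y)).det) Y :=
        ((differentiableOn_det_fderiv hD.isOpen (hF.iterate k).differentiableOn).differentiableAt
          (hD.isOpen.mem_nhds (hαΩ Y (hσ.le.trans hY)))).comp Y (hαd Y hY0 (hσ.le.trans hY))
      have h2 : DifferentiableAt ℂ (fun Y : ℂ => ((σ / Y) ^ 2) ^ n *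
          Complex.exp (γ * k * (Y - σ))) Y := by
        fun_prop (disch := assumption)
      exact h1.mul h2
    · intro Y hY hY1
      have hYre : 0 ≤ Y.re := by rw [hY]; exact hσ.le
      have hYn : σ ≤ ‖Y‖ := hY ▸ Complex.re_le_norm Y
      have hYp : 0 < ‖Y‖ := hσ.trans_le hYn
      refine le_trans ?_ (le_max_left _ _)
      rw [hnorm, hY, sub_self, mul_zero, Real.exp_zero, mul_one]
      have h1 := hline _ (hF.iterate k) (Y⁻¹ + C₂) (hre Y hYre)
      have h2 : ‖Y⁻¹ + (C₂ : ℂ)‖ / (Y⁻¹ + (C₂ : ℂ)).re ≤ (1 + C₂) * (‖Y‖ / σ) := by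
        have h3 : σ / ‖Y‖ ^ 2 ≤ (Y⁻¹ + (C₂ : ℂ)).re := by
          rw [Complex.add_re, Complex.inv_re, Complex.ofReal_re, hY, Complex.normSq_eq_norm_sq]
          linarith
        have h4 : ‖Y⁻¹ + (C₂ : ℂ)‖ ≤ (1 + C₂) / ‖Y‖ := by
          refine (norm_add_le _ _).trans ?_
          rw [norm_inv, Complex.norm_real, Real.norm_of_nonneg hC₂.le, add_div, one_div]
          gcongr
          rw [le_div_iff₀ hYp]
          nlinarith
        calc _ ≤ (1 + C₂) / ‖Y‖ / (σ / ‖Y‖ ^ 2) := by gcongr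
          _ = _ := by field_simp
      have h5 : 0 ≤ ‖Y⁻¹ + (C₂ : ℂ)‖ / (Y⁻¹ + (C₂ : ℂ)).re :=
        div_nonneg (norm_nonneg _) (hC₂.le.trans (hre Y hYre))
      calc _ ≤ C * ((‖Y⁻¹ + (C₂ : ℂ)‖ / (Y⁻¹ + (C₂ : ℂ)).re) ^ 2) ^ n * ((σ / ‖Y‖) ^ 2) ^ n := by
            gcongr
        _ ≤ C * (((1 + C₂) * (‖Y‖ / σ)) ^ 2) ^ n * ((σ / ‖Y‖) ^ 2) ^ n := by gcongr
        _ = C * ((1 + C₂) ^ 2) ^ n := by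
          rw [mul_assoc, ← mul_pow, ← mul_pow]
          congr 3
          field_simp
    · intro Y hY hY1
      refine le_trans ?_ (le_max_right _ _)
      rw [hnorm, hY1, div_one]
      have h1 := harc k _ ⟨Y, ⟨hσ.le.trans hY, hY1⟩, rfl⟩
      have h2 : Y.re ≤ 1 := hY1 ▸ Complex.re_le_norm Y
      have h3 : ((σ ^ 2) ^ n) ≤ 1 := pow_le_one₀ (by positivity) (pow_le_one₀ hσ.le (by linarith))
      calc _ ≤ (Ca * Real.exp (-γ * k)) * (1 * Real.exp (γ * k * (1 - 0))) := by gcongr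
        _ = Ca := by
          rw [one_mul, mul_assoc, ← Real.exp_add]; simp
    · simp; linarith
    · rw [Complex.norm_real, Real.norm_of_nonneg (by positivity)]; exact hσ1
  rw [hnorm, Complex.norm_real, Real.norm_of_nonneg (by positivity), Complex.ofReal_re] at hbound
  have hα2 : α ((2 * σ : ℝ) : ℂ) = (((2 * σ)⁻¹ + C₂)⁻¹ : ℝ) • e := by
    rw [hα, ← Complex.coe_smul]; push_cast; rfl
  rw [hα2] at hbound
  have h5 : σ / (2 * σ) = 2⁻¹ := by field_simp
  have h6 : 2 * σ - σ = σ := by ring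
  rw [h5, h6] at hbound
  have h7 : Real.exp (-γ * k * σ) = (Real.exp (γ * k * σ))⁻¹ := by rw [← Real.exp_neg]; ring_nf
  rw [h7, ← div_eq_mul_inv, le_div_iff₀ (Real.exp_pos _)]
  rw [inv_pow, inv_pow, ← mul_assoc, mul_right_comm, ← div_eq_mul_inv,
    div_le_iff₀ (by positivity)] at hbound
  exact hbound

/-- A tangent self map with an interior fixed point does not contract volume there. -/
theorem one_le_norm_det_fderiv [FiniteDimensional ℂ E]
    (hD : IsModelDomain Ω ℓ c K ε) (he : ℓ e = 1) (hF : IsTangentSelfMap Ω F) (hz₀ : z₀ ∈ Ω)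
    (hfix : F z₀ = z₀) : 1 ≤ ‖(fderiv ℂ F z₀).det‖ := by
  by_contra! hdet
  obtain ⟨C₂, hC₂, C, hC, γ, hγ, hdecay⟩ :=
    hD.exists_norm_det_fderiv_iterate_le_exp_of_det_lt_one he hF hz₀ hfix hdet
  obtain ⟨M, hM0, hM⟩ : ∃ M : ℝ, 0 < M ∧ C * Real.exp (-γ * M) < 1 / 2 := by
    have h1 : Tendsto (fun M : ℝ => C * Real.exp (-γ * M)) atTop (𝓝 (C * 0)) := by
      refine (Real.tendsto_exp_atBot.comp ?_).const_mul C
      exact tendsto_id.const_mul_atTop_of_neg (by linarith)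
    rw [mul_zero] at h1
    obtain ⟨M, h2, h3⟩ := ((eventually_gt_atTop 0).and
      (h1.eventually_lt_const (by norm_num : (0 : ℝ) < 1 / 2))).exists
    exact ⟨M, h2, h3⟩
  have hs : Tendsto (fun σ : ℝ => ((2 * σ)⁻¹ + C₂)⁻¹) (𝓝[>] 0) (𝓝[>] 0) := by
    refine tendsto_inv_atTop_nhdsGT_zero.comp (tendsto_atTop_add_const_right _ _ ?_)
    refine tendsto_inv_nhdsGT_zero.comp ?_
    refine tendsto_nhdsWithin_iff.2 ⟨?_, ?_⟩
    · have : Tendsto (fun σ : ℝ => 2 * σ) (𝓝 0) (𝓝 (2 * 0)) := tendsto_id.const_mul 2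
      rw [mul_zero] at this
      exact this.mono_left nhdsWithin_le_nhds
    · filter_upwards [self_mem_nhdsWithin] with σ hσ
      have : (0 : ℝ) < σ := hσ
      exact mul_pos two_pos this
  have h1 := hs.eventually (hD.eventually_half_le_norm_det_fderiv_iterate he hF
    (M := 2 * M + 2) (by positivity))
  have h2 : ∀ᶠ σ : ℝ in 𝓝[>] 0, 2 * σ ≤ 1 := by
    filter_upwards [nhdsWithin_le_nhds (Iic_mem_nhds (show (0 : ℝ) < 1 / 2 by norm_num))] with σ hσ
    have : σ ≤ 1 / 2 := hσ
    linarith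
  obtain ⟨σ, ⟨h3, h4⟩, h5⟩ := ((h1.and h2).and self_mem_nhdsWithin).exists
  have hσ : (0 : ℝ) < σ := h5
  set k := ⌈M / σ⌉₊ with hk
  have hk1 : M ≤ k * σ := by
    rw [← div_le_iff₀ hσ]; exact Nat.le_ceil _
  have hk2 : k * σ ≤ M + σ := by
    have := (Nat.ceil_lt_add_one (show 0 ≤ M / σ by positivity)).le
    rw [← hk] at this
    calc k * σ ≤ (M / σ + 1) * σ := by gcongr
      _ = M + σ := by field_simp
  have hs2 : ((2 * σ)⁻¹ + C₂)⁻¹ ≤ 2 * σ := by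
    rw [inv_le_comm₀ (by positivity) (by positivity)]; linarith
  have h6 := h3 k (by
    calc (k : ℝ) * ((2 * σ)⁻¹ + C₂)⁻¹ ≤ k * (2 * σ) := by gcongr
      _ ≤ 2 * M + 2 := by linarith)
  have h7 := hdecay σ hσ h4 k
  rw [Complex.coe_smul] at h6
  have h8 : C * Real.exp (-γ * k * σ) ≤ C * Real.exp (-γ * M) :=
    mul_le_mul_of_nonneg_left (Real.exp_le_exp.2 (by nlinarith)) hC.le
  linarith

end IsModelDomain

/-! ### Excluding unimodular eigenvalues different from one -/

theorem pow_apply_eigenvector {A : E →L[ℂ] E} {l : ℂ} {v : E} (h : A v = l • v) (k : ℕ) :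
    (A ^ k) v = l ^ k • v := by
  induction k with
  | zero => simp
  | succ k ih => rw [pow_succ, mul_apply_eq_comp, h, map_smul, ih, smul_smul, pow_succ']

theorem norm_le_geometric_of_semiconj {F : E → E} {f : E → G} {l : ℂ} {x : E} {r η B : ℝ} {N : ℕ}
    (hl : l ≠ 1) (hN : 0 < N) (hr : 0 < r) (hη : ∀ y ∈ ball x r, ‖F y - y‖ ≤ η)
    (hηr : 2 * N * η < r) (hf : DifferentiableOn ℂ f (ball x r))
    (hB : ∀ y ∈ ball x r, ‖f y‖ ≤ B) (hfF : ∀ y ∈ ball x r, f (F y) = l • f y) :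
    ‖f x‖ ≤ B * (4 * N * η / (r * ‖l - 1‖)) ^ N := by
  have hN' : (0 : ℝ) < N := by exact_mod_cast hN
  have hl' : 0 < ‖l - 1‖ := norm_pos_iff.2 (sub_ne_zero.2 hl)
  set d : ℝ := r / (2 * N) with hd
  have hd0 : 0 < d := by positivity
  have hηd : η < d := by rw [hd, lt_div_iff₀ (by positivity)]; linarith
  set q : ℝ := 4 * N * η / (r * ‖l - 1‖) with hq
  have key : ∀ j : ℕ, ∀ w ∈ ball x (r - j * d), ‖f w‖ ≤ B * q ^ j := by
    intro j
    induction j with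
    | zero => simpa using hB
    | succ j ih =>
      intro w hw
      rw [mem_ball] at hw
      push_cast at hw
      have hjd : 0 ≤ j * d := by positivity
      have hwr : w ∈ ball x r := mem_ball.2 (by linarith)
      have hsub : ball w d ⊆ ball x (r - j * d) := ball_subset_ball' (by linarith)
      have hsub' : ball x (r - j * d) ⊆ ball x r := ball_subset_ball (by linarith)
      have hFw : F w ∈ ball w d := by
        rw [mem_ball, dist_eq_norm]; exact (hη w hwr).trans_lt hηd
      have h1 := norm_sub_le_of_norm_le_on_ball (hf.mono (hsub.trans hsub'))
        (fun y hy => ih y (hsub hy)) hFw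
      have h2 : f (F w) - f w = (l - 1) • f w := by rw [hfF w hwr, sub_smul, one_smul]
      rw [h2, norm_smul] at h1
      have h3 : 0 ≤ B * q ^ j := (norm_nonneg _).trans (ih w (hsub (mem_ball_self hd0)))
      have h4 : ‖l - 1‖ * ‖f w‖ ≤ 2 * (B * q ^ j) / d * η := by
        refine h1.trans ?_
        gcongr
        exact hη w hwr
      rw [← le_div_iff₀' hl'] at h4
      refine h4.trans (le_of_eq ?_)
      rw [pow_succ, hd]
      conv_rhs => rw [hq]
      field_simp
      ring
  refine key N x (mem_ball_self ?_)
  rw [hd]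
  have : N * (r / (2 * N)) = r / 2 := by field_simp
  linarith

namespace IsModelDomain

variable {Ω : Set E} {ℓ : E →L[ℂ] ℂ} {c K ε : ℝ} {F : E → E} {e z₀ : E}

theorem eventually_norm_le_exp_of_semiconj (hD : IsModelDomain Ω ℓ c K ε) {u : E} (hu : ℓ u = 1)
    (hF : IsTangentSelfMap Ω F) {f : E → G} {l : ℂ} {B : ℝ} (hl : l ≠ 1)
    (hf : DifferentiableOn ℂ f Ω) (hB0 : 0 ≤ B) (hB : ∀ z ∈ Ω, ‖f z‖ ≤ B)
    (hfF : ∀ z ∈ Ω, f (F z) = l • f z) {M : ℝ} (hM : 0 < M) :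
    ∀ᶠ s : ℝ in 𝓝[>] 0, ‖f ((s : ℂ) • u)‖ ≤ B * Real.exp (-(M / s)) := by
  obtain ⟨c₁, hc₁, hray⟩ := hD.exists_ball_along_ray hu hF
  have hl' : 0 < ‖l - 1‖ := norm_pos_iff.2 (sub_ne_zero.2 hl)
  set δ : ℝ := min (c₁ / (4 * (M + 1))) (c₁ * ‖l - 1‖ * Real.exp (-1) / (4 * (M + 1))) with hδ
  have hδ0 : 0 < δ := by positivity
  have hδ1 : 4 * (M + 1) * δ ≤ c₁ := by
    have := min_le_left (c₁ / (4 * (M + 1))) (c₁ * ‖l - 1‖ * Real.exp (-1) / (4 * (M + 1)))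
    rw [← hδ, le_div_iff₀ (by positivity)] at this
    linarith
  have hδ2 : 4 * (M + 1) * δ ≤ c₁ * ‖l - 1‖ * Real.exp (-1) := by
    have := min_le_right (c₁ / (4 * (M + 1))) (c₁ * ‖l - 1‖ * Real.exp (-1) / (4 * (M + 1)))
    rw [← hδ, le_div_iff₀ (by positivity)] at this
    linarith
  filter_upwards [hray δ hδ0, nhdsWithin_le_nhds (Iic_mem_nhds (one_pos : (0 : ℝ) < 1))]
    with s ⟨hs, hsΩ, hsF⟩ hs1
  have hs1' : s ≤ 1 := hs1
  set N := ⌈M / s⌉₊ with hN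
  have hN1 : M / s ≤ N := Nat.le_ceil _
  have hN0 : 0 < N := Nat.ceil_pos.2 (by positivity)
  have hN2 : N * s ≤ M + 1 := by
    have := (Nat.ceil_lt_add_one (show 0 ≤ M / s by positivity)).le
    rw [← hN] at this
    calc N * s ≤ (M / s + 1) * s := by gcongr
      _ = M + s := by field_simp
      _ ≤ M + 1 := by linarith
  have hNη : N * (δ * s ^ 2) ≤ (M + 1) * δ * s := by
    calc N * (δ * s ^ 2) = (N * s) * δ * s := by ring
      _ ≤ _ := by gcongr
  have h1 := norm_le_geometric_of_semiconj hl hN0 (by positivity) hsF (by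
      have : 0 < (M + 1) * δ * s := by positivity
      nlinarith) (hf.mono hsΩ)
    (fun y hy => hB y (hsΩ hy)) fun y hy => hfF y (hsΩ hy)
  refine h1.trans ?_
  gcongr
  have hq : 4 * N * (δ * s ^ 2) / (c₁ * s * ‖l - 1‖) ≤ Real.exp (-1) := by
    rw [div_le_iff₀ (by positivity)]
    calc 4 * N * (δ * s ^ 2) = 4 * (N * (δ * s ^ 2)) := by ring
      _ ≤ 4 * ((M + 1) * δ * s) := by gcongr
      _ = (4 * (M + 1) * δ) * s := by ring
      _ ≤ (c₁ * ‖l - 1‖ * Real.exp (-1)) * s := by gcongr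
      _ = _ := by ring
  calc _ ≤ (Real.exp (-1)) ^ N := by gcongr
    _ = Real.exp (-N) := by rw [← Real.exp_nat_mul]; ring_nf
    _ ≤ _ := Real.exp_le_exp.2 (by linarith)

theorem eq_zero_on_disc_of_semiconj (hD : IsModelDomain Ω ℓ c K ε) {u : E} (hu : ℓ u = 1)
    (hF : IsTangentSelfMap Ω F) {f : E → G} {l : ℂ} {B : ℝ} (hl : l ≠ 1)
    (hf : DifferentiableOn ℂ f Ω) (hB0 : 0 ≤ B) (hB : ∀ z ∈ Ω, ‖f z‖ ≤ B)
    (hfF : ∀ z ∈ Ω, f (F z) = l • f z) {X : ℂ} (hX : K * ‖u‖ ^ 2 + 1 ≤ X.re) :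
    f (X⁻¹ • u) = 0 := by
  have hK := hD.K_pos
  set A : ℝ := K * ‖u‖ ^ 2 + 1 with hA
  have hA0 : 0 < A := by positivity
  set g : ℂ → G := fun Y => f ((Y + (A : ℂ))⁻¹ • u) with hg
  have hmem : ∀ Y : ℂ, 0 ≤ Y.re → (Y + (A : ℂ))⁻¹ • u ∈ Ω := fun Y hY =>
    hD.inv_smul_mem hu (by rw [Complex.add_re, Complex.ofReal_re]; linarith)
  have hgd : ∀ Y : ℂ, 0 ≤ Y.re → DifferentiableAt ℂ g Y := fun Y hY => by
    have h0 : Y + (A : ℂ) ≠ 0 := fun h => by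
      have := congrArg Complex.re h
      rw [Complex.add_re, Complex.ofReal_re, Complex.zero_re] at this
      linarith
    have h1 : DifferentiableAt ℂ (fun Y : ℂ => (Y + (A : ℂ))⁻¹ • u) Y := by
      fun_prop (disch := assumption)
    exact (hf.differentiableAt (hD.isOpen.mem_nhds (hmem Y hY))).comp Y h1
  have hgB : ∀ Y : ℂ, 0 ≤ Y.re → ‖g Y‖ ≤ B := fun Y hY => hB _ (hmem Y hY)
  have hzero : EqOn g 0 {z : ℂ | 0 ≤ z.re} := by
    refine PhragmenLindelof.eq_zero_on_right_half_plane_of_superexponential_decay ?_ ?_ ?_ ?_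
    · refine DifferentiableOn.diffContOnCl ?_
      rw [Complex.closure_setOfPred_lt_re]
      exact fun Y hY => (hgd Y hY).differentiableWithinAt
    · refine ⟨1, by norm_num, 0, Asymptotics.IsBigO.of_bound B ?_⟩
      filter_upwards [mem_inf_of_right (mem_principal_self _)] with Y hY
      have : 0 < Y.re := hY
      simpa using hgB Y this.le
    · intro n
      have hlim : Tendsto (fun x : ℝ => (x + A)⁻¹) atTop (𝓝[>] 0) :=
        tendsto_inv_atTop_nhdsGT_zero.comp (tendsto_atTop_add_const_right _ _ tendsto_id)
      have h1 := hlim.eventually (hD.eventually_norm_le_exp_of_semiconj hu hF hl hf hB0 hB hfF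
        (M := n + 1) (by positivity))
      have h2 : Tendsto (fun x : ℝ => B * Real.exp (-x)) atTop (𝓝 0) := by
        simpa using (Real.tendsto_exp_neg_atTop_nhds_zero.const_mul B)
      refine squeeze_zero' (Eventually.of_forall fun x => by positivity) ?_ h2
      filter_upwards [h1, eventually_ge_atTop 0] with x hx hx0
      have h3 : g x = f (((x + A)⁻¹ : ℝ) • u) := by
        rw [hg, ← Complex.coe_smul]; push_cast; rfl
      rw [Complex.coe_smul, ← h3, div_inv_eq_mul] at hx
      calc Real.exp x ^ n * ‖g x‖ ≤ Real.exp x ^ n * (B * Real.exp (-((n + 1) * (x + A)))) := by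
            gcongr
        _ = B * Real.exp (n * x - (n + 1) * (x + A)) := by
          rw [← Real.exp_nat_mul, mul_left_comm, ← Real.exp_add]; ring_nf
        _ ≤ B * Real.exp (-x) := by
          gcongr
          have : 0 ≤ ((n : ℝ) + 1) * A := by positivity
          nlinarith
    · exact ⟨B, fun x => hgB _ (by simp)⟩
  have h := hzero (x := X - A) (by simpa using hX)
  simpa [hg] using h

theorem eqOn_zero_of_semiconj [CompleteSpace G] (hD : IsModelDomain Ω ℓ c K ε) (he : ℓ e = 1)
    (hF : IsTangentSelfMap Ω F) {f : E → G} {l : ℂ} {B : ℝ} (hl : l ≠ 1)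
    (hf : DifferentiableOn ℂ f Ω) (hB : ∀ z ∈ Ω, ‖f z‖ ≤ B)
    (hfF : ∀ z ∈ Ω, f (F z) = l • f z) : EqOn f 0 Ω := by
  have hK := hD.K_pos
  set A : ℝ := K * ‖e‖ ^ 2 + 2 with hA
  have hA0 : 0 < A := by positivity
  have hx : (A : ℂ)⁻¹ • e ∈ Ω := hD.inv_smul_mem he (by rw [Complex.ofReal_re, hA]; linarith)
  have hB0 : 0 ≤ B := (norm_nonneg _).trans (hB _ hx)
  have hA0' : (A : ℂ) ≠ 0 := by exact_mod_cast hA0.ne'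
  have hℓx : ℓ ((A : ℂ)⁻¹ • e) = (A : ℂ)⁻¹ := by simp [he]
  have hℓx0 : ℓ ((A : ℂ)⁻¹ • e) ≠ 0 := by rw [hℓx]; exact inv_ne_zero hA0'
  refine eqOn_zero_of_eventuallyEq_zero hD.isOpen hD.isPreconnected hf hx ?_
  have hinv : ContinuousAt (fun w => (ℓ w)⁻¹) ((A : ℂ)⁻¹ • e) := ℓ.continuous.continuousAt.inv₀ hℓx0
  have hcont : ContinuousAt (fun w => ((ℓ w)⁻¹).re - (K * ‖(ℓ w)⁻¹ • w‖ ^ 2 + 1))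
      ((A : ℂ)⁻¹ • e) :=
    (Complex.continuous_re.continuousAt.comp hinv).sub
      ((((hinv.smul continuousAt_id).norm.pow 2).const_mul K).add continuousAt_const)
  have hpos : 0 < ((ℓ ((A : ℂ)⁻¹ • e))⁻¹).re -
      (K * ‖(ℓ ((A : ℂ)⁻¹ • e))⁻¹ • ((A : ℂ)⁻¹ • e)‖ ^ 2 + 1) := by
    rw [hℓx, inv_inv, smul_smul, mul_inv_cancel₀ hA0', one_smul, Complex.ofReal_re, hA]
    linarith
  filter_upwards [hcont.eventually_const_lt hpos, ℓ.continuous.continuousAt.eventually_ne hℓx0]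
    with w hw hw0
  have h := hD.eq_zero_on_disc_of_semiconj (u := (ℓ w)⁻¹ • w) (X := (ℓ w)⁻¹)
    (by rw [map_smul, smul_eq_mul, inv_mul_cancel₀ hw0]) hF hl hf hB0 hB hfF (by linarith)
  rwa [inv_inv, smul_smul, mul_inv_cancel₀ hw0, one_smul] at h

theorem eigenvalue_eq_one_of_norm_eq_one [FiniteDimensional ℂ E]
    (hD : IsModelDomain Ω ℓ c K ε) (he : ℓ e = 1) (hF : IsTangentSelfMap Ω F) (hz₀ : z₀ ∈ Ω)
    (hfix : F z₀ = z₀) {l : ℂ} {v : E} (hv : v ≠ 0) (hlv : fderiv ℂ F z₀ v = l • v)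
    (hl : ‖l‖ = 1) : l = 1 := by
  by_contra hl1
  have hl0 : l ≠ 0 := fun h => by simp [h] at hl
  have : ProperSpace E := FiniteDimensional.proper ℂ E
  obtain ⟨B, hB0, hB⟩ := hD.exists_norm_le
  set Φ : ℕ → E → E := fun N z => ((N : ℂ) + 1)⁻¹ • ∑ j ∈ Finset.range (N + 1), l⁻¹ ^ j • F^[j] z
    with hΦ
  have hN1 : ∀ N : ℕ, ((N : ℂ) + 1) ≠ 0 := fun N => Nat.cast_add_one_ne_zero N
  have hnN : ∀ N : ℕ, ‖((N : ℂ) + 1)‖ = N + 1 := fun N => by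
    rw [← Nat.cast_succ, Complex.norm_natCast]; simp
  have hΦB : ∀ N, ∀ z ∈ Ω, ‖Φ N z‖ ≤ B := fun N z hz => by
    rw [hΦ, norm_smul, norm_inv, hnN, inv_mul_le_iff₀ (by positivity)]
    refine (norm_sum_le_of_le _ (f := fun j => l⁻¹ ^ j • F^[j] z) (n := fun _ => B)
      fun j _ => ?_).trans (by simp)
    rw [norm_smul, norm_pow, norm_inv, hl, inv_one, one_pow, one_mul]
    exact hB _ (hF.mapsTo.iterate j hz)
  have hΦd : ∀ N, DifferentiableOn ℂ (Φ N) Ω := fun N => by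
    refine DifferentiableOn.const_smul ?_ _
    exact DifferentiableOn.fun_sum fun j _ => (hF.iterate j).differentiableOn.const_smul _
  set U : Ultrafilter ℕ := hyperfilter ℕ with hU
  have hUtop : (U : Filter ℕ) ≤ atTop := by
    rw [← Nat.cofinite_eq_atTop]; exact hyperfilter_le_cofinite
  have hlim : ∀ z, ∃ y, z ∈ Ω → Tendsto (fun N => Φ N z) U (𝓝 y) := fun z => by
    by_cases hz : z ∈ Ω
    · have hle : ((U.map fun N => Φ N z : Ultrafilter E) : Filter E) ≤ 𝓟 (closedBall 0 B) := by
        rw [Ultrafilter.coe_map, le_principal_iff, mem_map]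
        exact univ_mem' fun N => by simpa using hΦB N z hz
      obtain ⟨y, _, hy⟩ := (isCompact_closedBall (0 : E) B).ultrafilter_le_nhds _ hle
      exact ⟨y, fun _ => hy⟩
    · exact ⟨0, fun h => (hz h).elim⟩
  choose f hf using hlim
  have hfd : ∀ z ∈ Ω, ∃ D : E →L[ℂ] E, HasFDerivAt f D z ∧
      Tendsto (fun N => fderiv ℂ (Φ N) z) U (𝓝 D) := fun z hz => by
    obtain ⟨r, hr, hrΩ⟩ := Metric.isOpen_iff.1 hD.isOpen z hz
    exact exists_hasFDerivAt_of_ultrafilter_limit U hr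
      (Eventually.of_forall fun N => (hΦd N).mono hrΩ)
      (Eventually.of_forall fun N w hw => hΦB N w (hrΩ hw)) fun w hw => hf w (hrΩ hw)
  have hfdiff : DifferentiableOn ℂ f Ω := fun z hz => by
    obtain ⟨D, hD', -⟩ := hfd z hz
    exact hD'.differentiableAt.differentiableWithinAt
  have hfB : ∀ z ∈ Ω, ‖f z‖ ≤ B := fun z hz =>
    le_of_tendsto (hf z hz).norm (Eventually.of_forall fun N => hΦB N z hz)
  have hfF : ∀ z ∈ Ω, f (F z) = l • f z := fun z hz => by
    have h1 : ∀ N, Φ N (F z) =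
        l • Φ N z + (l * ((N : ℂ) + 1)⁻¹) • (l⁻¹ ^ (N + 1) • F^[N + 1] z - z) := fun N => by
      have h2 : ∑ j ∈ Finset.range (N + 1), l⁻¹ ^ j • F^[j] (F z) =
          l • ∑ j ∈ Finset.range (N + 1), l⁻¹ ^ (j + 1) • F^[j + 1] z := by
        rw [Finset.smul_sum]
        refine Finset.sum_congr rfl fun j _ => ?_
        rw [smul_smul, pow_succ', ← mul_assoc, mul_inv_cancel₀ hl0, one_mul, iterate_succ_apply]
      have h3 : ∑ j ∈ Finset.range (N + 1), l⁻¹ ^ (j + 1) • F^[j + 1] z =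
          ∑ j ∈ Finset.range (N + 1), l⁻¹ ^ j • F^[j] z + (l⁻¹ ^ (N + 1) • F^[N + 1] z - z) := by
        have h4 := Finset.sum_range_succ' (fun j => l⁻¹ ^ j • F^[j] z) (N + 1)
        have h5 := Finset.sum_range_succ (fun j => l⁻¹ ^ j • F^[j] z) (N + 1)
        rw [h5] at h4
        simp only [pow_zero, one_smul, iterate_zero, id_eq] at h4
        rw [add_sub_assoc', h4, add_sub_cancel_right]
      simp only [hΦ]
      rw [h2, h3]
      module
    have h6 : Tendsto (fun N : ℕ => (l * ((N : ℂ) + 1)⁻¹) • (l⁻¹ ^ (N + 1) • F^[N + 1] z - z))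
        atTop (𝓝 0) := by
      have h7 : Tendsto (fun N : ℕ => 1 / ((N : ℝ) + 1) * (2 * B)) atTop (𝓝 0) := by
        simpa using tendsto_one_div_add_atTop_nhds_zero_nat.mul_const (2 * B)
      refine squeeze_zero_norm (fun N => ?_) h7
      rw [norm_smul, norm_mul, hl, one_mul, norm_inv, hnN, one_div]
      gcongr
      refine (norm_sub_le _ _).trans ?_
      rw [norm_smul, norm_pow, norm_inv, hl, inv_one, one_pow, one_mul]
      linarith [hB _ (hF.mapsTo.iterate (N + 1) hz), hB z hz]
    have h8 := ((hf z hz).const_smul l).add (h6.mono_left hUtop)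
    rw [add_zero] at h8
    refine tendsto_nhds_unique (hf (F z) (hF.mapsTo hz)) ?_
    simpa only [h1] using h8
  have hzero := hD.eqOn_zero_of_semiconj he hF hl1 hfdiff hfB hfF
  obtain ⟨D, hDf, hDlim⟩ := hfd z₀ hz₀
  have hD0 : D = 0 := by
    have h1 : f =ᶠ[𝓝 z₀] fun _ => 0 :=
      (hD.isOpen.eventually_mem hz₀).mono fun z hz => hzero hz
    exact hDf.unique ((hasFDerivAt_const (0 : E) z₀).congr_of_eventuallyEq h1)
  have hF' : HasFDerivAt F (fderiv ℂ F z₀) z₀ :=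
    (hF.differentiableOn.differentiableAt (hD.isOpen.mem_nhds hz₀)).hasFDerivAt
  have hΦv : ∀ N, fderiv ℂ (Φ N) z₀ v = v := fun N => by
    have h1 : HasFDerivAt (Φ N) (((N : ℂ) + 1)⁻¹ •
        ∑ j ∈ Finset.range (N + 1), l⁻¹ ^ j • (fderiv ℂ F z₀) ^ j) z₀ :=
      (HasFDerivAt.fun_sum fun j _ => (hF'.iterate hfix j).const_smul _).const_smul _
    rw [h1.fderiv]
    simp only [_root_.smul_apply, _root_.sum_apply, pow_apply_eigenvector hlv, smul_smul,
      ← mul_pow, inv_mul_cancel₀ hl0, one_pow, one_smul, Finset.sum_const, Finset.card_range]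
    rw [← Nat.cast_smul_eq_nsmul ℂ, smul_smul]
    push_cast
    rw [inv_mul_cancel₀ (hN1 N), one_smul]
  have h2 := ((ContinuousLinearMap.apply ℂ E v).continuous.tendsto D).comp hDlim
  have h3 : Tendsto (fun _ : ℕ => v) U (𝓝 (D v)) := by
    refine h2.congr fun N => ?_
    simpa using hΦv N
  rw [tendsto_const_nhds_iff, hD0] at h3
  exact hv (by simpa using h3)

end IsModelDomain

/-! ### Rigidity at the fixed point -/

theorem norm_multiset_prod_le_one {s : Multiset ℂ} (hs : ∀ x ∈ s, ‖x‖ ≤ 1) : ‖s.prod‖ ≤ 1 := by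
  induction s using Multiset.induction_on with
  | empty => simp
  | cons a s ih =>
    rw [Multiset.prod_cons, norm_mul]
    exact mul_le_one₀ (hs a (Multiset.mem_cons_self a s)) (norm_nonneg _)
      (ih fun x hx => hs x (Multiset.mem_cons_of_mem hx))

theorem one_le_norm_of_one_le_norm_multiset_prod {s : Multiset ℂ} (hs : ∀ x ∈ s, ‖x‖ ≤ 1)
    (hprod : 1 ≤ ‖s.prod‖) {x : ℂ} (hx : x ∈ s) : 1 ≤ ‖x‖ := by
  obtain ⟨t, rfl⟩ := Multiset.exists_cons_of_mem hx
  rw [Multiset.prod_cons, norm_mul] at hprod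
  have h := norm_multiset_prod_le_one fun y hy => hs y (Multiset.mem_cons_of_mem hy)
  exact hprod.trans (mul_le_of_le_one_right (norm_nonneg _) h)

/-- A power-bounded operator with determinant of modulus at least one and no unimodular eigenvalue
different from one is the identity. -/
theorem eq_one_of_norm_pow_le [FiniteDimensional ℂ E] {A : E →L[ℂ] E} {C : ℝ}
    (hpow : ∀ k : ℕ, ‖A ^ k‖ ≤ C) (hdet : 1 ≤ ‖A.det‖)
    (huni : ∀ (l : ℂ) (v : E), v ≠ 0 → A v = l • v → ‖l‖ = 1 → l = 1) : A = 1 := by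
  set T : Module.End ℂ E := (A : E →ₗ[ℂ] E) with hT
  have hsplit : T.charpoly.Splits := IsAlgClosed.splits _
  have heig : ∀ l ∈ T.charpoly.roots, ∃ v : E, v ≠ 0 ∧ A v = l • v := fun l hl => by
    obtain ⟨v, hv⟩ := ((Module.End.hasEigenvalue_iff_isRoot_charpoly T l).2
      (Polynomial.isRoot_of_mem_roots hl)).exists_hasEigenvector
    exact ⟨v, hv.2, hv.apply_eq_smul⟩
  have hle : ∀ l ∈ T.charpoly.roots, ‖l‖ ≤ 1 := fun l hl => by
    obtain ⟨v, hv, hlv⟩ := heig l hl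
    by_contra! h1
    obtain ⟨k, hk⟩ := pow_unbounded_of_one_lt C h1
    have h2 := (A ^ k).le_opNorm v
    rw [pow_apply_eigenvector hlv, norm_smul, norm_pow] at h2
    exact absurd ((le_of_mul_le_mul_right h2 (norm_pos_iff.2 hv)).trans (hpow k)) (not_le.2 hk)
  have hone : ∀ l ∈ T.charpoly.roots, l = 1 := fun l hl => by
    obtain ⟨v, hv, hlv⟩ := heig l hl
    refine huni l v hv hlv (le_antisymm (hle l hl) ?_)
    refine one_le_norm_of_one_le_norm_multiset_prod hle ?_ hl
    rwa [← Module.End.det_eq_prod_roots_charpoly_of_splits hsplit]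
  have hnil : IsNilpotent (T - 1) := by
    have h1 := hsplit.eq_prod_roots_of_monic T.charpoly_monic
    rw [Multiset.eq_replicate_of_mem hone, Multiset.map_replicate, Multiset.prod_replicate] at h1
    have h2 := T.aeval_self_charpoly
    rw [h1] at h2
    exact ⟨T.charpoly.roots.card, by simpa using h2⟩
  have hker : ∀ v, (T - 1) ((T - 1) v) = 0 → (T - 1) v = 0 := fun v hv => by
    by_contra h0
    set u := (T - 1) v with hu
    have hAu : A u = u := by
      have : T u - u = 0 := hv
      exact sub_eq_zero.1 this
    have hAv : A v = v + u := by
      have : u = T v - v := hu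
      rw [this]; simp [hT]
    have hk : ∀ k : ℕ, (A ^ k) v = v + (k : ℂ) • u := fun k => by
      induction k with
      | zero => simp
      | succ k ih =>
        rw [pow_succ', mul_apply_eq_comp, ih, map_add, map_smul, hAu, hAv]
        push_cast
        module
    have hu0 : 0 < ‖u‖ := norm_pos_iff.2 h0
    obtain ⟨k, hk'⟩ := exists_nat_gt ((C * ‖v‖ + ‖v‖) / ‖u‖)
    rw [div_lt_iff₀ hu0] at hk'
    have h1 := (A ^ k).le_opNorm v
    rw [hk] at h1
    have h2 : (k : ℝ) * ‖u‖ ≤ ‖v + (k : ℂ) • u‖ + ‖v‖ := by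
      have := norm_sub_le (v + (k : ℂ) • u) v
      rwa [add_sub_cancel_left, norm_smul, Complex.norm_natCast] at this
    have h3 : ‖A ^ k‖ * ‖v‖ ≤ C * ‖v‖ := by gcongr; exact hpow k
    linarith
  have hzero : ∀ (m : ℕ) (v : E), ((T - 1) ^ (m + 1)) v = 0 → (T - 1) v = 0 := fun m => by
    induction m with
    | zero => simp
    | succ m ih =>
      intro v hv
      refine hker v (ih ((T - 1) v) ?_)
      rwa [pow_succ, Module.End.mul_apply] at hv
  obtain ⟨m, hm⟩ := hnil
  ext v
  have h1 : (T - 1) v = 0 := hzero m v (by rw [pow_succ', hm]; simp)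
  have h2 : T v - v = 0 := h1
  exact sub_eq_zero.1 h2

section Cartan

variable {Ω : Set E} {F : E → E} {B : ℝ} {z₀ : E}

theorem hasStrictFDerivAt_of_differentiableOn [FiniteDimensional ℂ E] [FiniteDimensional ℂ G]
    {f : E → G} (hΩ : IsOpen Ω) (hf : DifferentiableOn ℂ f Ω) (hz₀ : z₀ ∈ Ω) :
    HasStrictFDerivAt f (fderiv ℂ f z₀) z₀ := by
  refine hasStrictFDerivAt_of_hasFDerivAt_of_continuousAt
    ((hΩ.eventually_mem hz₀).mono fun z hz =>
      (hf.differentiableAt (hΩ.mem_nhds hz)).hasFDerivAt) ?_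
  exact continuousAt_clm_apply.2 fun v =>
    (differentiableOn_fderiv_apply hΩ hf v).continuousOn.continuousAt (hΩ.mem_nhds hz₀)

theorem tendsto_iterate_nhds_fixedPoint (hF : ContinuousAt F z₀) (hfix : F z₀ = z₀) (k : ℕ) :
    Tendsto F^[k] (𝓝 z₀) (𝓝 z₀) := by
  have h : Tendsto F (𝓝 z₀) (𝓝 z₀) := by simpa only [ContinuousAt, hfix] using hF
  exact h.iterate k

theorem isBigO_iterate_sub_fixedPoint (hF : DifferentiableAt ℂ F z₀) (hfix : F z₀ = z₀) (k : ℕ) :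
    (fun w => F^[k] w - z₀) =O[𝓝 z₀] fun w => w - z₀ := by
  have h := (hF.hasFDerivAt.iterate hfix k).isBigO_sub
  rwa [iterate_fixed hfix k] at h

/-- Cartan's uniqueness argument: the order of contact of `F` with the identity improves. -/
theorem isLittleO_pow_succ_of_isLittleO_pow [FiniteDimensional ℂ E] (hΩ : IsOpen Ω)
    (hF : DifferentiableOn ℂ F Ω) (hm : MapsTo F Ω Ω) (hB : ∀ z ∈ Ω, ‖z‖ ≤ B) (hz₀ : z₀ ∈ Ω)
    (hfix : F z₀ = z₀) (hd1 : fderiv ℂ F z₀ = 1) {m : ℕ}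
    (hg : (fun w => F w - w) =o[𝓝 z₀] fun w => ‖w - z₀‖ ^ m) :
    (fun w => F w - w) =o[𝓝 z₀] fun w => ‖w - z₀‖ ^ (m + 1) := by
  obtain ⟨R, hR, hRΩ⟩ := Metric.isOpen_iff.1 hΩ z₀ hz₀
  have hB0 : 0 ≤ B := (norm_nonneg _).trans (hB _ hz₀)
  have hFd : DifferentiableAt ℂ F z₀ := hF.differentiableAt (hΩ.mem_nhds hz₀)
  set C : ℝ := 2 * B / R ^ (m + 1) with hC
  have hC0 : 0 ≤ C := by positivity
  have hlo : ∀ k : ℕ, (fun w => F^[k] w - w) =o[𝓝 z₀] fun w => ‖w - z₀‖ ^ m := fun k => by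
    induction k with
    | zero => simp
    | succ k ih =>
      have h1 : (fun w => F (F^[k] w) - F^[k] w) =o[𝓝 z₀] fun w => ‖F^[k] w - z₀‖ ^ m :=
        hg.comp_tendsto (tendsto_iterate_nhds_fixedPoint hFd.continuousAt hfix k)
      have h2 := h1.trans_isBigO ((isBigO_iterate_sub_fixedPoint hFd hfix k).norm_norm.pow m)
      refine (h2.add ih).congr_left fun w => ?_
      rw [iterate_succ_apply']; abel
  have hunif : ∀ k : ℕ, ∀ w ∈ ball z₀ R, ‖F^[k] w - w‖ ≤ C * ‖w - z₀‖ ^ (m + 1) := by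
    intro k w hw
    have h0 : F^[k] z₀ - z₀ = 0 := by rw [iterate_fixed hfix k, sub_self]
    have h1 := Complex.dist_le_mul_div_pow_of_mapsTo_ball_of_isLittleO
      (f := fun w => F^[k] w - w) (R₂ := 2 * B) (n := m)
      (((differentiableOn_iterate hF hm k).mono hRΩ).sub differentiableOn_id) (fun y hy => by
        rw [h0, mem_closedBall_zero_iff]
        linarith [norm_sub_le (F^[k] y) y, hB _ (hm.iterate k (hRΩ hy)), hB _ (hRΩ hy)])
      (by simpa only [h0, sub_zero] using hlo k) hw
    rw [h0, dist_zero_right, dist_eq_norm, div_pow] at h1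
    refine h1.trans (le_of_eq ?_)
    rw [hC]; ring
  have hbig : ∀ k : ℕ, (fun w => F^[k] w - w) =O[𝓝 z₀] fun w => ‖w - z₀‖ ^ (m + 1) := fun k => by
    refine Asymptotics.IsBigO.of_bound C ?_
    filter_upwards [ball_mem_nhds z₀ hR] with w hw
    rw [norm_pow, norm_norm]
    exact hunif k w hw
  have hstrict : HasStrictFDerivAt (fun w => F w - w) (0 : E →L[ℂ] E) z₀ := by
    have h := (hasStrictFDerivAt_of_differentiableOn hΩ hF hz₀).sub (hasStrictFDerivAt_id z₀)
    rw [hd1, ContinuousLinearMap.one_def, sub_self] at h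
    exact h
  have hlin : ∀ k : ℕ, (fun w => F^[k] w - w - (k : ℂ) • (F w - w)) =o[𝓝 z₀]
      fun w => ‖w - z₀‖ ^ (m + 1) := fun k => by
    induction k with
    | zero => simp
    | succ k ih =>
      have ht : Tendsto (fun w => (F^[k] w, w)) (𝓝 z₀) (𝓝 (z₀, z₀)) :=
        (tendsto_iterate_nhds_fixedPoint hFd.continuousAt hfix k).prodMk_nhds tendsto_id
      have h1 := hstrict.isLittleO.comp_tendsto ht
      simp only [_root_.zero_apply, sub_zero, comp_def] at h1
      refine ((h1.trans_isBigO (hbig k)).add ih).congr_left fun w => ?_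
      rw [iterate_succ_apply']
      push_cast
      module
  refine Asymptotics.isLittleO_iff.2 fun ε hε => ?_
  obtain ⟨k, hk⟩ := exists_nat_gt ((C + 1) / ε)
  rw [div_lt_iff₀ hε] at hk
  have hk0 : (0 : ℝ) < k := by
    have : 0 < (k : ℝ) * ε := by linarith
    exact pos_of_mul_pos_left this hε.le
  filter_upwards [ball_mem_nhds z₀ hR, (Asymptotics.isLittleO_iff.1 (hlin k)) one_pos] with w hw h1
  rw [norm_pow, norm_norm, one_mul] at h1
  rw [norm_pow, norm_norm]
  have h2 := hunif k w hw
  have h3 : (k : ℝ) * ‖F w - w‖ ≤ (C + 1) * ‖w - z₀‖ ^ (m + 1) := by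
    have h4 := norm_sub_le (F^[k] w - w) (F^[k] w - w - (k : ℂ) • (F w - w))
    rw [sub_sub_cancel, norm_smul, Complex.norm_natCast] at h4
    linarith
  refine le_of_mul_le_mul_left (h3.trans ?_) hk0
  rw [← mul_assoc]
  gcongr

/-- Cartan's uniqueness theorem for bounded domains. -/
theorem eqOn_id_of_fderiv_eq_one [FiniteDimensional ℂ E] (hΩ : IsOpen Ω) (hconn : IsPreconnected Ω)
    (hF : DifferentiableOn ℂ F Ω) (hm : MapsTo F Ω Ω) (hB : ∀ z ∈ Ω, ‖z‖ ≤ B) (hz₀ : z₀ ∈ Ω)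
    (hfix : F z₀ = z₀) (hd1 : fderiv ℂ F z₀ = 1) : EqOn F id Ω := by
  have : CompleteSpace E := FiniteDimensional.complete ℂ E
  have hlo : ∀ m : ℕ, (fun w => F w - w) =o[𝓝 z₀] fun w => ‖w - z₀‖ ^ (m + 1) := fun m => by
    induction m with
    | zero =>
      have h := (hF.differentiableAt (hΩ.mem_nhds hz₀)).hasFDerivAt.isLittleO
      rw [hd1, hfix] at h
      simp only [zero_add, pow_one]
      refine h.norm_right.congr_left fun w => ?_
      simp
    | succ m ih => exact isLittleO_pow_succ_of_isLittleO_pow hΩ hF hm hB hz₀ hfix hd1 ih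
  obtain ⟨R, hR, hRΩ⟩ := Metric.isOpen_iff.1 hΩ z₀ hz₀
  have hzero : (fun w => F w - w) =ᶠ[𝓝 z₀] 0 := by
    filter_upwards [ball_mem_nhds z₀ hR] with w hw
    have h0 : F z₀ - z₀ = 0 := by rw [hfix, sub_self]
    have h1 : ∀ m : ℕ, ‖F w - w‖ ≤ 2 * B * (dist w z₀ / R) ^ (m + 1 + 1) := fun m => by
      have h := Complex.dist_le_mul_div_pow_of_mapsTo_ball_of_isLittleO
        (f := fun w => F w - w) (R₂ := 2 * B) (n := m + 1)
        ((hF.mono hRΩ).sub differentiableOn_id) (fun y hy => by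
          rw [h0, mem_closedBall_zero_iff]
          linarith [norm_sub_le (F y) y, hB _ (hm (hRΩ hy)), hB _ (hRΩ hy)])
        (by simpa only [h0, sub_zero] using hlo m) hw
      rwa [h0, dist_zero_right] at h
    have h2 : Tendsto (fun m : ℕ => 2 * B * (dist w z₀ / R) ^ (m + 1 + 1)) atTop
        (𝓝 (2 * B * 0)) := by
      refine Tendsto.const_mul _ ?_
      exact (tendsto_pow_atTop_nhds_zero_of_lt_one (by positivity)
        ((div_lt_one hR).2 (mem_ball.1 hw))).comp
        ((tendsto_add_atTop_nat 1).comp (tendsto_add_atTop_nat 1))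
    rw [mul_zero] at h2
    exact norm_le_zero_iff.1 (ge_of_tendsto' h2 h1)
  intro w hw
  exact sub_eq_zero.1
    (eqOn_zero_of_eventuallyEq_zero hΩ hconn (hF.sub differentiableOn_id) hz₀ hzero hw)

end Cartan

/-- A self map of a model domain that is tangent to the identity to order two at the origin and
has an interior fixed point is the identity. -/
theorem IsModelDomain.eqOn_id [FiniteDimensional ℂ E] {Ω : Set E} {ℓ : E →L[ℂ] ℂ} {c K ε : ℝ}
    {F : E → E} {e z₀ : E} (hD : IsModelDomain Ω ℓ c K ε) (he : ℓ e = 1)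
    (hF : IsTangentSelfMap Ω F) (hz₀ : z₀ ∈ Ω) (hfix : F z₀ = z₀) : EqOn F id Ω := by
  obtain ⟨B, hB0, hB⟩ := hD.exists_norm_le
  obtain ⟨r, hr, hrΩ⟩ := Metric.isOpen_iff.1 hD.isOpen z₀ hz₀
  refine eqOn_id_of_fderiv_eq_one hD.isOpen hD.isPreconnected hF.differentiableOn hF.mapsTo hB hz₀
    hfix (eq_one_of_norm_pow_le (C := 2 * B / r) (fun k => ?_)
      (hD.one_le_norm_det_fderiv he hF hz₀ hfix)
      fun l v hv hlv hl => hD.eigenvalue_eq_one_of_norm_eq_one he hF hz₀ hfix hv hlv hl)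
  have h := (hF.differentiableOn.differentiableAt (hD.isOpen.mem_nhds hz₀)).hasFDerivAt.iterate
    hfix k
  rw [← h.fderiv]
  exact norm_fderiv_le_of_norm_le_on_ball hr ((hF.iterate k).differentiableOn.mono hrΩ)
    fun w hw => hB _ (hF.mapsTo.iterate k (hrΩ hw))

/-! ### Normalizing the boundary at a strongly pseudoconvex point -/

theorem taylor_two_isLittleO {V : Type*} [NormedAddCommGroup V] [NormedSpace ℝ V] {ρ : V → ℝ}
    (hρ : ContDiff ℝ 2 ρ) (p : V) :
    (fun ζ => ρ (p + ζ) - ρ p - fderiv ℝ ρ p ζ - (1 / 2) * fderiv ℝ (fderiv ℝ ρ) p ζ ζ)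
      =o[𝓝 0] fun ζ => ‖ζ‖ ^ 2 := by
  set H := fderiv ℝ (fderiv ℝ ρ) p with hH
  have hsymm : ∀ x y, H x y = H y x := fun x y =>
    (hρ.contDiffAt.isSymmSndFDerivAt (by simp)) x y
  have hρ1 : ContDiff ℝ 1 (fderiv ℝ ρ) := hρ.fderiv_right (by norm_num)
  have hH' : HasFDerivAt (fderiv ℝ ρ) H p :=
    (hρ1.differentiable (by norm_num) p).hasFDerivAt
  have hd : ∀ ζ, HasFDerivAt
      (fun ζ => ρ (p + ζ) - ρ p - fderiv ℝ ρ p ζ - (1 / 2) * H ζ ζ)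
      (fderiv ℝ ρ (p + ζ) - fderiv ℝ ρ p - H ζ) ζ := fun ζ => by
    have h1 : HasFDerivAt (fun ζ => ρ (p + ζ)) (fderiv ℝ ρ (p + ζ)) ζ := by
      have h := (hρ.differentiable (by norm_num) (p + ζ)).hasFDerivAt
      exact (hasFDerivAt_comp_add_left p).2 h
    have h2 : HasFDerivAt (fun ζ => H ζ ζ) _ ζ := H.hasFDerivAt.clm_apply (hasFDerivAt_id ζ)
    refine (((h1.sub_const (ρ p)).sub (fderiv ℝ ρ p).hasFDerivAt).sub
      (h2.const_mul (1 / 2))).congr_fderiv ?_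
    ext v
    simp [hsymm v ζ]
    ring
  rw [Asymptotics.isLittleO_iff]
  intro η hη
  have h3 := (hasFDerivAt_iff_isLittleO_nhds_zero.1 hH').def hη
  obtain ⟨δ, hδ, hball⟩ := Metric.eventually_nhds_iff_ball.1 h3
  filter_upwards [ball_mem_nhds (0 : V) hδ] with ζ hζ
  rw [mem_ball_zero_iff] at hζ
  have h4 := (convex_closedBall (0 : V) ‖ζ‖).norm_image_sub_le_of_norm_hasFDerivWithin_le
    (C := η * ‖ζ‖) (fun x _ => (hd x).hasFDerivWithinAt) (fun x hx => by
      rw [mem_closedBall_zero_iff] at hx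
      exact (hball x (mem_ball_zero_iff.2 (hx.trans_lt hζ))).trans (by gcongr))
    (mem_closedBall_self (norm_nonneg ζ)) (mem_closedBall_zero_iff.2 le_rfl)
  simp only [add_zero, sub_self, map_zero, mul_zero, sub_zero] at h4
  rw [norm_pow, norm_norm]
  exact h4.trans_eq (by ring)

/-- The complex-bilinear form whose real part on the diagonal is the part of a real quadratic form
that changes sign under multiplication by `I`. -/
theorem exists_bilinear_re_eq (H : E →L[ℝ] E →L[ℝ] ℝ) (hH : ∀ x y, H x y = H y x) :
    ∃ q : E →L[ℂ] E →L[ℂ] ℂ,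
      ∀ x, (q x x).re = (1 / 4) * (H x x - H (I • x) (I • x)) := by
  have hII : ∀ x : E, I • I • x = -x := fun x => by
    rw [smul_smul, Complex.I_mul_I, neg_one_smul]
  let r : E → E → ℝ := fun x y => (1 / 4) * (H x y - H (I • x) (I • y))
  let B : E → E → ℂ := fun x y => r x y - I * r x (I • y)
  have hr : ∀ x y, r x y = r y x := fun x y => by simp only [r, hH x y, hH (I • x)]
  have hB : ∀ x y, B x y = B y x := fun x y => by
    have h : r x (I • y) = r y (I • x) := by
      simp only [r, hII, map_neg, _root_.neg_apply, hH x, hH (I • x)]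
      ring
    simp only [B, hr x y, h]
  have hadd : ∀ x y z, B x (y + z) = B x y + B x z := fun x y z => by
    simp only [B, r, smul_add, map_add]
    push_cast
    ring
  have hreal : ∀ (t : ℝ) x y, H x ((t : ℂ) • y) = t * H x y := fun t x y => by
    rw [Complex.coe_smul, map_smul, smul_eq_mul]
  have hsmul : ∀ (t : ℂ) x y, B x (t • y) = t * B x y := fun t x y => by
    have ht : t • y = (t.re : ℂ) • y + (t.im : ℂ) • I • y := by
      rw [smul_smul, ← add_smul, Complex.re_add_im]
    have hIt : I • t • y = (t.re : ℂ) • I • y + (-t.im : ℝ) • y := by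
      rw [ht, smul_add, smul_comm I, smul_comm I, hII, smul_neg, neg_smul, Complex.coe_smul,
        Complex.coe_smul]
    have e1 : r x (t • y) = t.re * r x y + t.im * r x (I • y) := by
      simp only [r, hIt, hII]
      rw [ht]
      simp only [map_add, hreal, map_smul, smul_eq_mul, map_neg]
      ring
    have e2 : r x (I • t • y) = t.re * r x (I • y) - t.im * r x y := by
      have hIIt : I • I • t • y = -((t.re : ℂ) • y) - (t.im : ℂ) • I • y := by
        rw [hII, ht]; abel
      simp only [r, hIIt]
      rw [hIt]
      simp only [map_add, map_sub, hreal, map_smul, smul_eq_mul, map_neg, hII]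
      ring
    simp only [B, e1, e2]
    apply Complex.ext
    · simp
    · simp
      ring
  let Bl : E →ₗ[ℂ] E →ₗ[ℂ] ℂ := LinearMap.mk₂ ℂ B
    (fun x y z => by rw [hB, hadd, hB z, hB z]) (fun t x y => by rw [hB, hsmul, hB y]; rfl)
    hadd (fun t x y => hsmul t x y)
  have hrn : ∀ x y, |r x y| ≤ ‖H‖ * ‖x‖ * ‖y‖ := fun x y => by
    have h1 := H.le_opNorm₂ x y
    have h2 := H.le_opNorm₂ (I • x) (I • y)
    rw [norm_smul, norm_smul, Complex.norm_I, one_mul, one_mul] at h2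
    rw [Real.norm_eq_abs, abs_le] at h1 h2
    have h0 : 0 ≤ ‖H‖ * ‖x‖ * ‖y‖ := by positivity
    rw [abs_le]
    constructor <;> simp only [r] <;> linarith [h1.1, h1.2, h2.1, h2.2]
  refine ⟨Bl.mkContinuous₂ (2 * ‖H‖) fun x y => ?_, fun x => ?_⟩
  · have h1 := hrn x y
    have h2 := hrn x (I • y)
    rw [norm_smul, Complex.norm_I, one_mul] at h2
    calc ‖(r x y : ℂ) - I * r x (I • y)‖
        ≤ ‖(r x y : ℂ)‖ + ‖I * (r x (I • y) : ℂ)‖ := norm_sub_le _ _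
      _ = |r x y| + |r x (I • y)| := by simp
      _ ≤ 2 * ‖H‖ * ‖x‖ * ‖y‖ := by linarith
  · change ((r x x : ℂ) - I * r x (I • x)).re = _
    simp [r]

theorem exists_leviForm_coercive [FiniteDimensional ℂ E] (ℓ : E →L[ℂ] ℂ)
    (H : E →L[ℝ] E →L[ℝ] ℝ)
    (hpos : ∀ x, x ≠ 0 → ℓ x = 0 → 0 < (1 / 4) * (H x x + H (I • x) (I • x))) :
    ∃ c > 0, ∀ x, ℓ x = 0 → c * ‖x‖ ^ 2 ≤ (1 / 4) * (H x x + H (I • x) (I • x)) := by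
  have : ProperSpace E := FiniteDimensional.proper ℂ E
  have hcpt : IsCompact (sphere (0 : E) 1 ∩ {x | ℓ x = 0}) :=
    (isCompact_sphere 0 1).inter_right (isClosed_eq ℓ.continuous continuous_const)
  obtain ⟨c, hc, hle⟩ := hcpt.exists_forall_le'
    (f := fun x => (1 / 4) * (H x x + H (I • x) (I • x))) (a := 0)
    (by fun_prop)
    (fun x hx => hpos x (ne_zero_of_mem_unit_sphere (⟨x, hx.1⟩ : sphere (0 : E) 1)) hx.2)
  refine ⟨c, hc, fun x hx => ?_⟩
  rcases eq_or_ne x 0 with rfl | hx0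
  · simp
  have hn : 0 < ‖x‖ := norm_pos_iff.2 hx0
  have h := hle (‖x‖⁻¹ • x) ⟨by simp [norm_smul, hn.ne'], by
    change ℓ (‖x‖⁻¹ • x) = 0
    rw [← Complex.coe_smul, map_smul, hx, smul_zero]⟩
  simp only [smul_comm I, map_smul, _root_.smul_apply, smul_eq_mul] at h
  calc c * ‖x‖ ^ 2 ≤ _ := mul_le_mul_of_nonneg_right h (sq_nonneg _)
    _ = _ := by field_simp

theorem exists_norm_sub_smul_le (ℓ : E →L[ℂ] ℂ) (e : E) :
    ∃ M > 0, ∀ x, ‖x - ℓ x • e‖ ≤ M * ‖x‖ := by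
  refine ⟨1 + ‖ℓ‖ * ‖e‖, by positivity, fun x => ?_⟩
  calc ‖x - ℓ x • e‖ ≤ ‖x‖ + ‖ℓ x‖ * ‖e‖ := (norm_sub_le _ _).trans_eq (by rw [norm_smul])
    _ ≤ ‖x‖ + ‖ℓ‖ * ‖x‖ * ‖e‖ := by gcongr; exact ℓ.le_opNorm x
    _ = _ := by ring

/-- After subtracting the pluriharmonic part, the second-order term of a strongly pseudoconvex
defining function is positive definite modulo the normal direction. -/
theorem exists_quadratic_bounds [FiniteDimensional ℂ E] (ℓ : E →L[ℂ] ℂ) {e : E} (he : ℓ e = 1)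
    (H : E →L[ℝ] E →L[ℝ] ℝ) (hH : ∀ x y, H x y = H y x)
    (hpos : ∀ x, x ≠ 0 → ℓ x = 0 → 0 < (1 / 4) * (H x x + H (I • x) (I • x)))
    (q : E →L[ℂ] E →L[ℂ] ℂ) (hq : ∀ x, (q x x).re = (1 / 4) * (H x x - H (I • x) (I • x))) :
    ∃ a > 0, ∃ B > 0, ∃ C > 0, ∀ x,
      a * ‖x‖ ^ 2 - B * ‖ℓ x‖ ^ 2
        ≤ (1 / 2) * H x x - (q (x - ℓ x • e) (x - ℓ x • e)).re ∧
      (1 / 2) * H x x - (q (x - ℓ x • e) (x - ℓ x • e)).re ≤ C * ‖x‖ ^ 2 := by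
  obtain ⟨c, hc, hcoer⟩ := exists_leviForm_coercive ℓ H hpos
  obtain ⟨M, hM, hproj⟩ := exists_norm_sub_smul_le ℓ e
  have hquad : ∀ x y, |H x y| ≤ ‖H‖ * ‖x‖ * ‖y‖ := fun x y => H.le_opNorm₂ x y
  refine ⟨c / 4, by positivity,
    (‖H‖ * ‖e‖) ^ 2 / (2 * c) + ‖H‖ * ‖e‖ ^ 2 / 2 + c / 2 * ‖e‖ ^ 2 + 1, by positivity,
    ‖H‖ / 2 + ‖q‖ * M ^ 2 + 1, by positivity, fun x => ⟨?_, ?_⟩⟩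
  · set v := x - ℓ x • e with hv
    set t := ℓ x with ht
    have hx : x = v + t • e := by rw [hv]; abel
    have hℓv : ℓ v = 0 := by rw [hv, map_sub, map_smul, he, smul_eq_mul, mul_one, sub_self]
    have h1 := hcoer v hℓv
    have h2 : H x x = H v v + 2 * H v (t • e) + H (t • e) (t • e) := by
      rw [hx]
      simp only [map_add, _root_.add_apply, hH (t • e) v]
      ring
    have h3 := (abs_le.1 (hquad v (t • e))).1
    have h4 := (abs_le.1 (hquad (t • e) (t • e))).1
    have h5 : ‖x‖ ≤ ‖v‖ + ‖t‖ * ‖e‖ := by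
      nth_rewrite 1 [hx]
      exact (norm_add_le _ _).trans_eq (by rw [norm_smul])
    rw [norm_smul] at h3 h4
    have h6 : ‖x‖ ^ 2 ≤ 2 * ‖v‖ ^ 2 + 2 * (‖t‖ * ‖e‖) ^ 2 := by
      nlinarith [sq_nonneg (‖v‖ - ‖t‖ * ‖e‖), norm_nonneg x]
    have h7 : ‖H‖ * ‖v‖ * (‖t‖ * ‖e‖)
        ≤ c / 2 * ‖v‖ ^ 2 + (‖H‖ * ‖e‖) ^ 2 / (2 * c) * ‖t‖ ^ 2 := by
      have h := sq_nonneg (c * ‖v‖ - ‖H‖ * ‖e‖ * ‖t‖)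
      have h' : 0 ≤ (c * ‖v‖ - ‖H‖ * ‖e‖ * ‖t‖) ^ 2 / (2 * c) := by positivity
      have h'' : (c * ‖v‖ - ‖H‖ * ‖e‖ * ‖t‖) ^ 2 / (2 * c)
          = c / 2 * ‖v‖ ^ 2 + (‖H‖ * ‖e‖) ^ 2 / (2 * c) * ‖t‖ ^ 2
            - ‖H‖ * ‖v‖ * (‖t‖ * ‖e‖) := by
        field_simp
        ring
      linarith
    rw [hq v, h2]
    nlinarith [mul_le_mul_of_nonneg_left h6 hc.le, sq_nonneg ‖t‖]
  · set v := x - ℓ x • e with hv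
    have h1 := (abs_le.1 (hquad x x)).2
    have h2 := (abs_le.1 ((Complex.abs_re_le_norm (q v v)).trans (q.le_opNorm₂ v v))).1
    have h3 : ‖q‖ * ‖v‖ * ‖v‖ ≤ ‖q‖ * (M * ‖x‖) * (M * ‖x‖) := by
      gcongr <;> exact hproj x
    nlinarith [sq_nonneg ‖x‖]

/-- The quadratic shear `x ↦ x + q (π x) (π x) • e`, where `π x = x - ℓ x • e`. -/
def shear (ℓ : E →L[ℂ] ℂ) (e : E) (q : E →L[ℂ] E →L[ℂ] ℂ) (x : E) : E :=
  x + q (x - ℓ x • e) (x - ℓ x • e) • e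

section Shear

variable {ℓ : E →L[ℂ] ℂ} {e : E} (q : E →L[ℂ] E →L[ℂ] ℂ)

theorem apply_shear (he : ℓ e = 1) (x : E) :
    ℓ (shear ℓ e q x) = ℓ x + q (x - ℓ x • e) (x - ℓ x • e) := by
  simp [shear, he]

theorem shear_neg_shear (he : ℓ e = 1) (x : E) : shear ℓ e (-q) (shear ℓ e q x) = x := by
  have h : shear ℓ e q x - ℓ (shear ℓ e q x) • e = x - ℓ x • e := by
    rw [apply_shear q he, shear, add_smul]
    abel
  rw [shear, h, shear, _root_.neg_apply, _root_.neg_apply, neg_smul, add_neg_cancel_right]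

theorem shear_shear_neg (he : ℓ e = 1) (x : E) : shear ℓ e q (shear ℓ e (-q) x) = x := by
  have h := shear_neg_shear (-q) he x
  rwa [neg_neg q] at h

@[simp]
theorem shear_zero : shear ℓ e q 0 = 0 := by simp [shear]

theorem differentiable_shear : Differentiable ℂ (shear ℓ e q) := by
  unfold shear
  fun_prop

theorem continuous_shear : Continuous (shear ℓ e q) := (differentiable_shear q).continuous

variable (ℓ e) in
theorem exists_norm_shear_sub_le : ∃ A > 0, ∀ x, ‖shear ℓ e q x - x‖ ≤ A * ‖x‖ ^ 2 := by
  obtain ⟨M, hM, hproj⟩ := exists_norm_sub_smul_le ℓ e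
  refine ⟨‖q‖ * M ^ 2 * ‖e‖ + 1, by positivity, fun x => ?_⟩
  rw [shear, add_sub_cancel_left, norm_smul]
  calc ‖q (x - ℓ x • e) (x - ℓ x • e)‖ * ‖e‖
      ≤ ‖q‖ * ‖x - ℓ x • e‖ * ‖x - ℓ x • e‖ * ‖e‖ := by gcongr; exact q.le_opNorm₂ _ _
    _ ≤ ‖q‖ * (M * ‖x‖) * (M * ‖x‖) * ‖e‖ := by gcongr <;> exact hproj x
    _ ≤ _ := by nlinarith [sq_nonneg ‖x‖]

theorem shear_sub_shear_isBigO [FiniteDimensional ℂ E] {α : Type*} {l : Filter α} {f g : α → E}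
    (hf : Tendsto f l (𝓝 0)) (hg : Tendsto g l (𝓝 0)) :
    (fun i => shear ℓ e q (f i) - shear ℓ e q (g i)) =O[l] fun i => f i - g i :=
  (hasStrictFDerivAt_of_differentiableOn isOpen_univ (differentiable_shear q).differentiableOn
    (mem_univ (0 : E))).isBigO_sub.comp_tendsto (hf.prodMk_nhds hg)

end Shear

section Normalization

variable [FiniteDimensional ℂ E] {Ω : Set E} {ρ : E → ℝ} {p e : E} {ℓ : E →L[ℂ] ℂ}
  {H : E →L[ℝ] E →L[ℝ] ℝ} {q : E →L[ℂ] E →L[ℂ] ℂ}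

/-- In the sheared coordinates the defining function is pinched between two paraboloids. -/
theorem exists_eventually_pinched (he : ℓ e = 1) (hH : ∀ x y, H x y = H y x)
    (hpos : ∀ x, x ≠ 0 → ℓ x = 0 → 0 < (1 / 4) * (H x x + H (I • x) (I • x)))
    (hq : ∀ x, (q x x).re = (1 / 4) * (H x x - H (I • x) (I • x)))
    (htaylor : (fun ζ => ρ (p + ζ) + (ℓ ζ).re - (1 / 2) * H ζ ζ) =o[𝓝 0] fun ζ => ‖ζ‖ ^ 2) :
    ∃ a > 0, ∃ B > 0, ∃ C > 0, ∀ᶠ w in 𝓝 (0 : E),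
      a * ‖w‖ ^ 2 - B * ‖ℓ w‖ ^ 2 ≤ ρ (p + shear ℓ e q w) + (ℓ w).re ∧
      ρ (p + shear ℓ e q w) + (ℓ w).re ≤ C * ‖w‖ ^ 2 := by
  obtain ⟨a, ha, B, hB, C, hC, hquad⟩ := exists_quadratic_bounds ℓ he H hH hpos q hq
  obtain ⟨A, hA, hshear⟩ := exists_norm_shear_sub_le ℓ e q
  have hS : Tendsto (shear ℓ e q) (𝓝 0) (𝓝 0) := by
    simpa using (continuous_shear (ℓ := ℓ) (e := e) q).tendsto 0
  have hn : Tendsto (fun w : E => A * ‖w‖) (𝓝 0) (𝓝 0) := by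
    have h : Continuous fun w : E => A * ‖w‖ := by fun_prop
    simpa using h.tendsto 0
  have hn2 : Tendsto (fun w : E => 2 * B * (‖ℓ‖ * A) ^ 2 * ‖w‖ ^ 2) (𝓝 0) (𝓝 0) := by
    have h : Continuous fun w : E => 2 * B * (‖ℓ‖ * A) ^ 2 * ‖w‖ ^ 2 := by fun_prop
    simpa using h.tendsto 0
  refine ⟨a / 16, by positivity, 2 * B, by positivity, 4 * (C + a / 2), by positivity, ?_⟩
  filter_upwards [hS.eventually (htaylor.def (half_pos ha)),
    hn.eventually_le_const (show (0 : ℝ) < 1 / 2 by norm_num),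
    hn2.eventually_le_const (show 0 < a / 16 by positivity)] with w h1 h2 h3
  set ζ := shear ℓ e q w with hζ
  have hw : w = shear ℓ e (-q) ζ := (shear_neg_shear q he w).symm
  have hℓw : (ℓ w).re = (ℓ ζ).re - (q (ζ - ℓ ζ • e) (ζ - ℓ ζ • e)).re := by
    have h := apply_shear (-q) he ζ
    rw [← hw] at h
    simp only [h, _root_.neg_apply, Complex.add_re, Complex.neg_re]
    ring
  obtain ⟨h4, h5⟩ := hquad ζ
  rw [Real.norm_eq_abs, norm_pow, norm_norm, abs_le] at h1
  have h6 := hshear w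
  rw [← hζ] at h6
  have h7 : ‖ζ - w‖ ≤ ‖w‖ / 2 := h6.trans (by nlinarith [norm_nonneg w])
  have h8 : ‖ζ‖ ≤ 2 * ‖w‖ := by linarith [norm_le_norm_add_norm_sub' ζ w, norm_nonneg w]
  have h9 : ‖w‖ ≤ 2 * ‖ζ‖ := by linarith [norm_le_norm_add_norm_sub ζ w, norm_nonneg w]
  have h10 : ‖ℓ ζ‖ ≤ ‖ℓ w‖ + ‖ℓ‖ * A * ‖w‖ ^ 2 := by
    have h : ‖ℓ (ζ - w)‖ ≤ ‖ℓ‖ * (A * ‖w‖ ^ 2) := (ℓ.le_opNorm _).trans (by gcongr)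
    rw [map_sub] at h
    linarith [norm_le_norm_add_norm_sub' (ℓ ζ) (ℓ w)]
  have h11 : ‖ℓ ζ‖ ^ 2 ≤ 2 * ‖ℓ w‖ ^ 2 + 2 * (‖ℓ‖ * A * ‖w‖ ^ 2) ^ 2 :=
    (pow_le_pow_left₀ (norm_nonneg _) h10 2).trans
      (by nlinarith [sq_nonneg (‖ℓ w‖ - ‖ℓ‖ * A * ‖w‖ ^ 2)])
  have h12 : ‖ζ‖ ^ 2 ≤ 4 * ‖w‖ ^ 2 := by nlinarith [norm_nonneg ζ]
  have h13 : ‖w‖ ^ 2 ≤ 4 * ‖ζ‖ ^ 2 := by nlinarith [norm_nonneg w]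
  have h14 : B * ‖ℓ ζ‖ ^ 2 ≤ 2 * B * ‖ℓ w‖ ^ 2 + a / 16 * ‖w‖ ^ 2 := by
    have := mul_le_mul_of_nonneg_left h11 hB.le
    have := mul_le_mul_of_nonneg_right h3 (sq_nonneg ‖w‖)
    nlinarith
  constructor
  · nlinarith
  · nlinarith

theorem image_shear_eq (he : ℓ e = 1) :
    (fun z => shear ℓ e (-q) (z - p)) '' Ω = {w | p + shear ℓ e q w ∈ Ω} := by
  ext w
  constructor
  · rintro ⟨z, hz, rfl⟩
    simpa [shear_shear_neg q he] using hz
  · exact fun hw => ⟨_, hw, by simp [shear_neg_shear q he]⟩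

theorem exists_isModelDomain (hΩ : IsOpen Ω) (hconn : IsPreconnected Ω)
    (hbd : Bornology.IsBounded Ω) (hρ : Ω = {z | ρ z < 0}) (hp : p ∉ Ω)
    (he : ℓ e = 1) (hH : ∀ x y, H x y = H y x)
    (hpos : ∀ x, x ≠ 0 → ℓ x = 0 → 0 < (1 / 4) * (H x x + H (I • x) (I • x)))
    (hq : ∀ x, (q x x).re = (1 / 4) * (H x x - H (I • x) (I • x)))
    (htaylor : (fun ζ => ρ (p + ζ) + (ℓ ζ).re - (1 / 2) * H ζ ζ) =o[𝓝 0] fun ζ => ‖ζ‖ ^ 2) :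
    ∃ c K ε, IsModelDomain {w | p + shear ℓ e q w ∈ Ω} ℓ c K ε := by
  have : ProperSpace E := FiniteDimensional.proper ℂ E
  obtain ⟨a, ha, B, hB, C, hC, hloc⟩ := exists_eventually_pinched he hH hpos hq htaylor
  obtain ⟨δ, hδ, hball⟩ := Metric.eventually_nhds_iff_ball.1 hloc
  have hcont : Continuous fun z => shear ℓ e (-q) (z - p) :=
    (continuous_shear (-q)).comp (continuous_id.sub continuous_const)
  refine ⟨a, B + C + ‖ℓ‖ / δ, δ, ?_⟩
  have hK : 0 < B + C + ‖ℓ‖ / δ := by positivity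
  exact
  { isOpen := hΩ.preimage (continuous_const.add (continuous_shear q))
    isPreconnected := by
      rw [← image_shear_eq he]
      exact hconn.image _ hcont.continuousOn
    isBounded := by
      rw [← image_shear_eq he]
      exact (hbd.isCompact_closure.image hcont).isBounded.subset (image_mono subset_closure)
    zero_notMem := by simpa using hp
    c_pos := ha
    K_pos := hK
    ε_pos := hδ
    outer := fun w hw hwδ => by
      have h1 := (hball w (mem_ball_zero_iff.2 hwδ)).1
      have h2 : ρ (p + shear ℓ e q w) < 0 := by simpa [hρ] using hw
      have h3 : 0 ≤ (C + ‖ℓ‖ / δ) * ‖ℓ w‖ ^ 2 := by positivity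
      nlinarith
    inner := fun w hw => by
      have h0 : 0 < ‖w‖ := norm_pos_iff.2 fun h => by simp [h] at hw
      have h1 : (ℓ w).re ≤ ‖ℓ‖ * ‖w‖ := (Complex.re_le_norm _).trans (ℓ.le_opNorm w)
      have h2 : ‖w‖ < δ := by
        by_contra! h
        have h3 : ‖ℓ‖ * ‖w‖ ≤ ‖ℓ‖ / δ * ‖w‖ ^ 2 := by
          rw [div_mul_eq_mul_div, le_div_iff₀ hδ]
          have := mul_le_mul_of_nonneg_left h (mul_nonneg (norm_nonneg ℓ) h0.le)
          nlinarith
        nlinarith [sq_nonneg ‖w‖, mul_nonneg (add_pos hB hC).le (sq_nonneg ‖w‖)]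
      have h4 := (hball w (mem_ball_zero_iff.2 h2)).2
      have h5 : 0 ≤ (B + ‖ℓ‖ / δ) * ‖w‖ ^ 2 := by positivity
      rw [hρ]
      change ρ (p + shear ℓ e q w) < 0
      nlinarith }

theorem isTangentSelfMap_shear {F : E → E} (he : ℓ e = 1)
    (hF : DifferentiableOn ℂ F Ω) (hmaps : MapsTo F Ω Ω)
    (ho : (fun z => F z - z) =o[𝓝[Ω] p] fun z => ‖z - p‖ ^ 2) :
    IsTangentSelfMap {w | p + shear ℓ e q w ∈ Ω}
      (fun w => shear ℓ e (-q) (F (p + shear ℓ e q w) - p)) where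
  differentiableOn := by
    have h : DifferentiableOn ℂ (fun w => p + shear ℓ e q w) {w | p + shear ℓ e q w ∈ Ω} :=
      ((differentiable_const p).add (differentiable_shear q)).differentiableOn
    exact (differentiable_shear (-q)).comp_differentiableOn
      ((hF.comp h fun _ hw => hw).sub_const p)
  mapsTo := fun w hw => by
    simpa [shear_shear_neg q he] using hmaps hw
  isLittleO := by
    have hS0 : Tendsto (shear ℓ e q) (𝓝[{w | p + shear ℓ e q w ∈ Ω}] 0) (𝓝 0) := by
      simpa using ((continuous_shear (ℓ := ℓ) (e := e) q).tendsto 0).mono_left nhdsWithin_le_nhds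
    have hS : Tendsto (fun w => p + shear ℓ e q w) (𝓝[{w | p + shear ℓ e q w ∈ Ω}] 0)
        (𝓝[Ω] p) := by
      refine tendsto_nhdsWithin_iff.2 ⟨?_, eventually_nhdsWithin_of_forall fun w hw => hw⟩
      simpa using hS0.const_add p
    have hbig : (shear ℓ e q) =O[𝓝[{w | p + shear ℓ e q w ∈ Ω}] 0] fun w => w := by
      simpa using shear_sub_shear_isBigO (ℓ := ℓ) (e := e) q
        (tendsto_id.mono_left nhdsWithin_le_nhds) (tendsto_const_nhds (x := (0 : E)))
    have h1 := ho.comp_tendsto hS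
    have h2 : (fun w => F (p + shear ℓ e q w) - p - shear ℓ e q w)
        =o[𝓝[{w | p + shear ℓ e q w ∈ Ω}] 0] fun w => ‖w‖ ^ 2 := by
      refine (h1.congr (fun w => ?_) fun w => ?_).trans_isBigO (hbig.norm_norm.pow 2)
      · simp only [comp_apply]
        abel
      · simp
    have h3 : Tendsto (fun w => F (p + shear ℓ e q w) - p)
        (𝓝[{w | p + shear ℓ e q w ∈ Ω}] 0) (𝓝 0) := by
      have hsq : Tendsto (fun w : E => ‖w‖ ^ 2) (𝓝[{w | p + shear ℓ e q w ∈ Ω}] 0) (𝓝 0) := by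
        have h : Continuous fun w : E => ‖w‖ ^ 2 := by fun_prop
        simpa using (h.tendsto 0).mono_left nhdsWithin_le_nhds
      simpa using (h2.isBigO.trans_tendsto hsq).add hS0
    have h4 := shear_sub_shear_isBigO (ℓ := ℓ) (e := e) (-q) h3 hS0
    simp only [shear_neg_shear q he] at h4
    exact h4.trans_isLittleO h2

/-- A holomorphic self map of a bounded domain with an interior fixed point is the identity if it
osculates the identity to second order at a strongly pseudoconvex boundary point. -/
theorem eqOn_id_of_isLittleO_sq {F : E → E} {z₀ : E} (hΩ : IsOpen Ω) (hconn : IsPreconnected Ω)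
    (hbd : Bornology.IsBounded Ω) (hρ : Ω = {z | ρ z < 0}) (hsmooth : ContDiff ℝ 2 ρ)
    (hp : ρ p = 0) (hdp : fderiv ℝ ρ p ≠ 0)
    (hlevi : ∀ x, x ≠ 0 → fderiv ℝ ρ p x = 0 → fderiv ℝ ρ p (I • x) = 0 →
      0 < (1 / 4) * (fderiv ℝ (fderiv ℝ ρ) p x x + fderiv ℝ (fderiv ℝ ρ) p (I • x) (I • x)))
    (hF : DifferentiableOn ℂ F Ω) (hmaps : MapsTo F Ω Ω)
    (ho : (fun z => F z - z) =o[𝓝[Ω] p] fun z => ‖z - p‖ ^ 2)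
    (hz₀ : z₀ ∈ Ω) (hfix : F z₀ = z₀) : EqOn F id Ω := by
  set H := fderiv ℝ (fderiv ℝ ρ) p with hHdef
  set L := fderiv ℝ ρ p with hL
  have hH : ∀ x y, H x y = H y x := fun x y =>
    (hsmooth.contDiffAt.isSymmSndFDerivAt (by simp)) x y
  obtain ⟨ℓ, hre, him⟩ : ∃ ℓ : E →L[ℂ] ℂ,
      (∀ x, (ℓ x).re = -L x) ∧ ∀ x, (ℓ x).im = L (I • x) :=
    ⟨-StrongDual.extendRCLike L,
      fun x => by simp [StrongDual.extendRCLike_apply],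
      fun x => by simp [StrongDual.extendRCLike_apply]⟩
  obtain ⟨v, hv⟩ : ∃ v, ℓ v ≠ 0 := by
    by_contra! h
    refine hdp (ContinuousLinearMap.ext fun x => ?_)
    have := hre x
    rw [h x, Complex.zero_re] at this
    simpa using this.symm
  have he : ℓ ((ℓ v)⁻¹ • v) = 1 := by rw [map_smul, smul_eq_mul, inv_mul_cancel₀ hv]
  obtain ⟨q, hq⟩ := exists_bilinear_re_eq H hH
  have hpos : ∀ x, x ≠ 0 → ℓ x = 0 → 0 < (1 / 4) * (H x x + H (I • x) (I • x)) :=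
    fun x hx hℓx => by
      have h1 := hre x
      have h2 := him x
      rw [hℓx] at h1 h2
      exact hlevi x hx (by simpa using h1.symm) (by simpa using h2.symm)
  have htaylor : (fun ζ => ρ (p + ζ) + (ℓ ζ).re - (1 / 2) * H ζ ζ)
      =o[𝓝 0] fun ζ => ‖ζ‖ ^ 2 :=
    (taylor_two_isLittleO hsmooth p).congr_left fun ζ => by rw [hre, hp]; ring
  obtain ⟨c, K, ε, hD⟩ := exists_isModelDomain hΩ hconn hbd hρ (by simp [hρ, hp]) he hH hpos hq
    htaylor
  have hmem : ∀ z ∈ Ω, p + shear ℓ ((ℓ v)⁻¹ • v) q (shear ℓ ((ℓ v)⁻¹ • v) (-q) (z - p)) ∈ Ω :=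
    fun z hz => by simpa [shear_shear_neg q he] using hz
  have hid := hD.eqOn_id he (isTangentSelfMap_shear he hF hmaps ho) (hmem z₀ hz₀)
    (by simp [shear_shear_neg q he, hfix])
  intro z hz
  have h := congrArg (shear ℓ ((ℓ v)⁻¹ • v) q) (hid (hmem z hz))
  simpa [shear_shear_neg q he] using h

end Normalization

end HuangConjecture

theorem huang_conjecture_strongly_pseudoconvex
    {n : ℕ} (hn : 2 ≤ n) (Ω : Set (En n)) (ρ : En n → ℝ)
    (hΩ : IsDomain' Ω) (hbd : Bornology.IsBounded Ω)
    (hρ : IsDefiningFunction Ω 3 ρ)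
    (hspc : ∀ q ∈ frontier Ω, StronglyPcxAt ρ q)
    (p : En n) (hp : p ∈ frontier Ω)
    (F : En n → En n) (hF : DifferentiableOn ℂ F Ω) (hFself : MapsTo F Ω Ω)
    (z₀ : En n) (hz₀ : z₀ ∈ Ω) (hfix : F z₀ = z₀)
    (ho : LittleOh Ω F p 2) :
    ∀ z ∈ Ω, F z = z := by
  obtain ⟨hsmooth, hΩρ, hfr, hd⟩ := hρ
  have hp0 : ρ p = 0 := by rw [hfr] at hp; exact hp
  have hpΩ : p ∉ Ω := by rw [hΩρ]; simp [hp0]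
  refine HuangConjecture.eqOn_id_of_isLittleO_sq hΩ.1 hΩ.2.isPreconnected hbd hΩρ
    (hsmooth.of_le ?_) hp0 (hd p hp) (fun x hx h1 h2 => ?_) hF hFself ?_ hz₀ hfix
  · exact WithTop.coe_le_coe.2 (show (2 : ℕ∞) ≤ 3 by norm_num)
  · have h := hspc p hp x hx ⟨h1, h2⟩
    simpa only [LeviForm, iteratedFDeriv_two_apply, Matrix.cons_val_zero,
      Matrix.cons_val_one] using h
  · refine Asymptotics.IsLittleO.of_norm_left ((Asymptotics.isLittleO_iff_tendsto' ?_).2 ho)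
    filter_upwards [self_mem_nhdsWithin] with z hz h
    have : z = p := by simpa [sub_eq_zero] using h
    exact absurd (this ▸ hz) hpΩ
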